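/- arXiv:1702.04764 — 7 statements merged into one kernel-verified Lean document; each statement's English description precedes it below -/
import Mathlib

section
/- Let d ≥ 1 and let X ⊆ ℝ^d be a convex set. Let n ≥ 1 and let 𝒳ₙ be a finite subset of X that is quasi-uniformly distributed in X with constants c, C (so 0 < c ≤ 2C). Let κ > 0, α > (d+1)/2, and let K ∈ 𝕂_{κ,α}. Set βₙ := C^{−1} n^{1/d}. Then for every x ∈ X, Σ_{y∈𝒳ₙ} K(βₙ(x−y)) ≤ κ · K_d · (1 + Σ_{j=1}^∞ [(j+1)^d − j^d] · j^{−2α}), where K_d := 2^{(3d+3)/2} (C/c)^d and the series converges since 2α > d+1. Consequently, the quasi-interpolation operators 𝒯ₙ : f ↦ (x ↦ Σ_{y∈𝒳ₙ} f(y) K(βₙ(x−y))) are uniformly bounded on the space of bounded continuous functions on X with operator norms at most this constant. -/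
open Metric

/-!
Rescaled by `(C h)⁻¹`, where `h = n ^ (-1 / d)`, the nodes are `q`-separated with `q = c / C ≤ 2`,
so the balls of radius `q / 2 ≤ 1` around them are disjoint. On the ball around `p` the value
`(1 + ‖p‖ ^ 2) ^ (-α)` is at most `2 ^ (b / 2) * max 1 ‖z‖ ^ (-b)` for every `0 ≤ b ≤ 2α`, so the
kernel sum is controlled by the integral of `max 1 ‖z‖ ^ (-b)`, which is `b / (b - d)` times the
volume of the unit ball when `b > d`. For `b = 2α` the series bound dominates `b / (b - d)`
as an upper sum of this integral, and for `b = d + 1` its first term `2 ^ d - 1` already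
suffices, as `d + 1 ≤ 2 ^ d`; hence `b = min (2α) (d + 1)` works throughout the range `2α > d` in
which the series converges.
-/

open MeasureTheory Module Filter

theorem sum_mul_measureReal_le_integral {α ι : Type*} [MeasurableSpace α] {μ : Measure α}
    {s : Finset ι} {A : ι → Set α} {a : ι → ℝ} {g : α → ℝ}
    (hA : ∀ i ∈ s, MeasurableSet (A i)) (hdisj : (s : Set ι).PairwiseDisjoint A)
    (hfin : ∀ i ∈ s, μ (A i) ≠ ⊤) (hg : Integrable g μ) (hg0 : 0 ≤ᵐ[μ] g)
    (hag : ∀ i ∈ s, ∀ x ∈ A i, a i ≤ g x) :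
    ∑ i ∈ s, a i * μ.real (A i) ≤ ∫ x, g x ∂μ :=
  calc ∑ i ∈ s, a i * μ.real (A i)
      ≤ ∑ i ∈ s, ∫ x in A i, g x ∂μ := Finset.sum_le_sum fun i hi ↦
        setIntegral_ge_of_const_le_real (hA i hi) (hfin i hi) (hag i hi) hg.integrableOn
    _ = ∫ x in ⋃ i ∈ s, A i, g x ∂μ :=
        (integral_biUnion_finset s hA hdisj fun _ _ ↦ hg.integrableOn).symm
    _ ≤ ∫ x, g x ∂μ := setIntegral_le_integral hg hg0

section RadialIntegral

variable {b : ℝ}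

theorem setIntegral_Ioc_zero_one_pow_mul_max_one_rpow (k : ℕ) :
    ∫ y in Set.Ioc (0 : ℝ) 1, y ^ k * max 1 y ^ (-b) = 1 / (k + 1) := by
  have heq : Set.EqOn (fun y : ℝ ↦ y ^ k * max 1 y ^ (-b)) (fun y ↦ y ^ k) (Set.Ioc 0 1) :=
    fun y hy ↦ by simp only [max_eq_left hy.2, Real.one_rpow, mul_one]
  rw [setIntegral_congr_fun measurableSet_Ioc heq,
    ← intervalIntegral.integral_of_le zero_le_one, integral_pow]
  simp

theorem integrableOn_Ioc_zero_one_pow_mul_max_one_rpow (k : ℕ) :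
    IntegrableOn (fun y : ℝ ↦ y ^ k * max 1 y ^ (-b)) (Set.Ioc 0 1) :=
  .of_integral_ne_zero <| by
    rw [setIntegral_Ioc_zero_one_pow_mul_max_one_rpow]
    positivity

theorem eqOn_Ioi_one_pow_mul_max_one_rpow (k : ℕ) :
    Set.EqOn (fun y : ℝ ↦ y ^ k * max 1 y ^ (-b)) (fun y ↦ y ^ (k - b)) (Set.Ioi 1) :=
  fun y (hy : 1 < y) ↦ by
    simp only [max_eq_right hy.le, sub_eq_add_neg, Real.rpow_add (one_pos.trans hy),
      Real.rpow_natCast]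

theorem integrableOn_Ioi_zero_pow_mul_max_one_rpow {k : ℕ} (hb : k + 1 < b) :
    IntegrableOn (fun y : ℝ ↦ y ^ k * max 1 y ^ (-b)) (Set.Ioi 0) := by
  rw [← Set.Ioc_union_Ioi_eq_Ioi zero_le_one, integrableOn_union,
    integrableOn_congr_fun (eqOn_Ioi_one_pow_mul_max_one_rpow k) measurableSet_Ioi]
  exact ⟨integrableOn_Ioc_zero_one_pow_mul_max_one_rpow k,
    integrableOn_Ioi_rpow_of_lt (by linarith) one_pos⟩

theorem integral_Ioi_zero_pow_mul_max_one_rpow {k : ℕ} (hb : k + 1 < b) :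
    ∫ y in Set.Ioi (0 : ℝ), y ^ k * max 1 y ^ (-b) = 1 / (k + 1) + 1 / (b - (k + 1)) := by
  have hint := integrableOn_Ioi_zero_pow_mul_max_one_rpow hb
  rw [← Set.Ioc_union_Ioi_eq_Ioi zero_le_one] at hint ⊢
  rw [setIntegral_union (Set.Ioc_disjoint_Ioi le_rfl) measurableSet_Ioi hint.left_of_union
      hint.right_of_union, setIntegral_Ioc_zero_one_pow_mul_max_one_rpow,
    setIntegral_congr_fun measurableSet_Ioi (eqOn_Ioi_one_pow_mul_max_one_rpow k),
    integral_Ioi_rpow_of_lt (by linarith) one_pos, Real.one_rpow, neg_div, ← div_neg]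
  congr 2
  ring

end RadialIntegral

section HaarMeasure

variable {E ι : Type*} [NormedAddCommGroup E] [NormedSpace ℝ E] [FiniteDimensional ℝ E]
  [MeasurableSpace E] [BorelSpace E] {μ : Measure E} [μ.IsAddHaarMeasure]

theorem sum_mul_pow_mul_measureReal_ball_le_integral {s : Finset ι} {p : ι → E} {a : ι → ℝ}
    {g : E → ℝ} {r : ℝ} (hr : 0 < r) (hsep : ∀ i ∈ s, ∀ j ∈ s, i ≠ j → 2 * r ≤ ‖p i - p j‖)
    (hg : Integrable g μ) (hg0 : 0 ≤ᵐ[μ] g) (hag : ∀ i ∈ s, ∀ x ∈ ball (p i) r, a i ≤ g x) :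
    (∑ i ∈ s, a i) * (r ^ finrank ℝ E * μ.real (ball 0 1)) ≤ ∫ x, g x ∂μ := by
  have hdisj : (s : Set ι).PairwiseDisjoint fun i ↦ ball (p i) r := fun i hi j hj hij ↦
    ball_disjoint_ball (by rw [dist_eq_norm, ← two_mul]; exact hsep i hi j hj hij)
  have hball (i : ι) : μ.real (ball (p i) r) = r ^ finrank ℝ E * μ.real (ball 0 1) := by
    simp [measureReal_def, Measure.addHaar_ball_of_pos μ _ hr, hr.le]
  simpa only [hball, ← Finset.sum_mul] using
    sum_mul_measureReal_le_integral (fun _ _ ↦ measurableSet_ball) hdisj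
      (fun _ _ ↦ measure_ball_lt_top.ne) hg hg0 hag

variable (μ) [Nontrivial E] {b : ℝ}

theorem integrable_max_one_norm_rpow (hb : finrank ℝ E < b) :
    Integrable (fun x : E ↦ max 1 ‖x‖ ^ (-b)) μ := by
  rw [integrable_fun_norm_addHaar μ (f := fun y ↦ max 1 y ^ (-b))]
  refine integrableOn_Ioi_zero_pow_mul_max_one_rpow ?_
  rwa [Nat.cast_pred finrank_pos, sub_add_cancel]

theorem integral_max_one_norm_rpow (hb : finrank ℝ E < b) :
    ∫ x : E, max 1 ‖x‖ ^ (-b) ∂μ = b / (b - finrank ℝ E) * μ.real (ball 0 1) := by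
  have hcast : ((finrank ℝ E - 1 : ℕ) : ℝ) + 1 = finrank ℝ E := by
    rw [Nat.cast_pred finrank_pos, sub_add_cancel]
  have hdim : (finrank ℝ E : ℝ) ≠ 0 := Nat.cast_ne_zero.2 finrank_pos.ne'
  have hgap : b - finrank ℝ E ≠ 0 := (sub_pos.2 hb).ne'
  rw [integral_fun_norm_addHaar μ fun y ↦ max 1 y ^ (-b)]
  simp only [nsmul_eq_mul, smul_eq_mul]
  rw [integral_Ioi_zero_pow_mul_max_one_rpow (hcast.trans_lt hb), hcast]
  field_simp
  ring

end HaarMeasure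

theorem one_add_sq_rpow_neg_le {t u b α : ℝ} (ht : 0 ≤ t) (hut : u ≤ 1 + t) (hb : 0 ≤ b)
    (hα : b ≤ 2 * α) : (1 + t ^ 2) ^ (-α) ≤ 2 ^ (b / 2) * max 1 u ^ (-b) := by
  have hmax : 0 < max 1 u := one_pos.trans_le (le_max_left 1 u)
  have hmaxt : max 1 u ≤ 1 + t := max_le (by linarith) hut
  calc (1 + t ^ 2) ^ (-α) ≤ (1 + t ^ 2) ^ (-(b / 2)) :=
        Real.rpow_le_rpow_of_exponent_le (by nlinarith) (by linarith)
    _ ≤ (max 1 u ^ 2 / 2) ^ (-(b / 2)) :=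
        Real.rpow_le_rpow_of_nonpos (by positivity) (by nlinarith [sq_nonneg (t - 1)])
          (by linarith)
    _ = 2 ^ (b / 2) * max 1 u ^ (-b) := by
        rw [Real.div_rpow (by positivity) zero_le_two, Real.rpow_neg zero_le_two, div_inv_eq_mul,
          ← Real.rpow_natCast_mul hmax.le, mul_comm]
        congr 2
        push_cast
        ring

theorem sum_one_add_norm_sq_rpow_neg_le {E ι : Type*} [NormedAddCommGroup E] [NormedSpace ℝ E]
    [FiniteDimensional ℝ E] [Nontrivial E] {s : Finset ι} {p : ι → E} {q b α : ℝ} (hq : 0 < q)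
    (hq2 : q ≤ 2) (hsep : ∀ i ∈ s, ∀ j ∈ s, i ≠ j → q ≤ ‖p i - p j‖) (hb : finrank ℝ E < b)
    (hbα : b ≤ 2 * α) :
    ∑ i ∈ s, (1 + ‖p i‖ ^ 2) ^ (-α) ≤
      2 ^ (b / 2) * (2 / q) ^ finrank ℝ E * (b / (b - finrank ℝ E)) := by
  borelize E
  let μ : Measure E := Measure.addHaar
  have hball : 0 < μ.real (ball 0 1) :=
    ENNReal.toReal_pos (measure_ball_pos μ 0 one_pos).ne' measure_ball_lt_top.ne
  have hb0 : 0 ≤ b := (Nat.cast_nonneg _).trans hb.le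
  have hkernel : ∀ i ∈ s, ∀ x ∈ ball (p i) (q / 2),
      (1 + ‖p i‖ ^ 2) ^ (-α) ≤ 2 ^ (b / 2) * max 1 ‖x‖ ^ (-b) := fun i _ x hx ↦ by
    have hx1 : ‖x - p i‖ < q / 2 := mem_ball_iff_norm.1 hx
    exact one_add_sq_rpow_neg_le (norm_nonneg _)
      (by linarith [norm_le_norm_add_norm_sub' x (p i)]) hb0 hbα
  have hpack := sum_mul_pow_mul_measureReal_ball_le_integral (half_pos hq)
    (by simpa only [mul_div_cancel₀ q two_ne_zero] using hsep)
    ((integrable_max_one_norm_rpow μ hb).const_mul _)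
    (ae_of_all _ fun x ↦ by positivity) hkernel
  rw [integral_const_mul, integral_max_one_norm_rpow μ hb, ← mul_assoc, ← mul_assoc] at hpack
  have hsum := le_of_mul_le_mul_right hpack hball
  rw [← le_div_iff₀ (by positivity)] at hsum
  refine hsum.trans_eq ?_
  rw [div_eq_mul_inv, ← inv_pow, inv_div]
  ring

theorem mul_one_sub_rpow_neg_le {s p q : ℝ} (hs : 0 < s) (hp : 0 ≤ p) (hq : 0 ≤ q) :
    p * (1 - s ^ (-q)) ≤ q * (s ^ p - 1) := by
  have hlog (r : ℝ) : r * Real.log s ≤ s ^ r - 1 := by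
    simpa only [Real.log_rpow hs] using Real.log_le_sub_one_of_pos (Real.rpow_pos_of_pos hs r)
  linear_combination q * hlog p + p * hlog (-q)

theorem mul_rpow_neg_sub_rpow_neg_le {x y p q : ℝ} (hx : 0 < x) (hy : 0 < y) (hp : 0 ≤ p)
    (hq : 0 ≤ q) : p * (x ^ (-q) - y ^ (-q)) ≤ q * ((y ^ p - x ^ p) * x ^ (-(p + q))) := by
  have h := mul_le_mul_of_nonneg_right (mul_one_sub_rpow_neg_le (div_pos hy hx) hp hq)
    (Real.rpow_nonneg hx.le (-q))
  have hsplit : x ^ (-q) = x ^ p * x ^ (-(p + q)) := by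
    rw [← Real.rpow_add hx]; congr 1; ring
  rw [Real.div_rpow hy.le hx.le, Real.div_rpow hy.le hx.le] at h
  have := Real.rpow_pos_of_pos hx p
  have := Real.rpow_pos_of_pos hx (-q)
  calc p * (x ^ (-q) - y ^ (-q)) = p * (1 - y ^ (-q) / x ^ (-q)) * x ^ (-q) := by field_simp
    _ ≤ q * (y ^ p / x ^ p - 1) * x ^ (-q) := h
    _ = q * ((y ^ p - x ^ p) * x ^ (-(p + q))) := by rw [hsplit]; field_simp

theorem hasSum_rpow_neg_sub_rpow_neg {q : ℝ} (hq : 0 < q) :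
    HasSum (fun j : ℕ ↦ ((j : ℝ) + 1) ^ (-q) - ((j : ℝ) + 2) ^ (-q)) 1 := by
  have hnonneg (j : ℕ) : 0 ≤ ((j : ℝ) + 1) ^ (-q) - ((j : ℝ) + 2) ^ (-q) :=
    sub_nonneg.2 <| Real.rpow_le_rpow_of_nonpos (by positivity) (by linarith) (by linarith)
  have hpartial (N : ℕ) :
      ∑ j ∈ Finset.range N, (((j : ℝ) + 1) ^ (-q) - ((j : ℝ) + 2) ^ (-q)) =
        1 - ((N : ℝ) + 1) ^ (-q) := by
    simpa [add_assoc, one_add_one_eq_two] using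
      Finset.sum_range_sub' (fun j : ℕ ↦ ((j : ℝ) + 1) ^ (-q)) N
  rw [hasSum_iff_tendsto_nat_of_nonneg hnonneg]
  simp only [hpartial]
  simpa using ((tendsto_rpow_neg_atTop hq).comp
    (tendsto_atTop_add_const_right _ 1 tendsto_natCast_atTop_atTop)).const_sub (1 : ℝ)

section ShellSum

/-- The `(j + 1)`-st term of the series in the bound: the increment of `t ↦ t ^ d` over the shell
`j + 1 ≤ t ≤ j + 2`, weighted by the decay `t ^ (-2α)` at its inner radius. -/
noncomputable def shellTerm (d : ℕ) (α : ℝ) (j : ℕ) : ℝ :=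
  (((j : ℝ) + 2) ^ d - ((j : ℝ) + 1) ^ d) * ((j : ℝ) + 1) ^ (-(2 * α))

/-- The dimensionless factor `1 + ∑_{j ≥ 1} ((j + 1) ^ d - j ^ d) j ^ (-2α)`, an upper sum of
`∫ max 1 ‖x‖ ^ (-2α) dx` over `ℝ ^ d` in units of the volume of the unit ball; it is meaningful
only for `d < 2α`, where the series converges. -/
noncomputable def shellSum (d : ℕ) (α : ℝ) : ℝ :=
  1 + ∑' j : ℕ, shellTerm d α j

variable {d : ℕ} {α : ℝ}

theorem shell_increment_nonneg (d j : ℕ) : 0 ≤ ((j : ℝ) + 2) ^ d - ((j : ℝ) + 1) ^ d :=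
  sub_nonneg.2 <| by gcongr; norm_num

theorem shellTerm_nonneg (d : ℕ) (α : ℝ) (j : ℕ) : 0 ≤ shellTerm d α j :=
  mul_nonneg (shell_increment_nonneg d j) (by positivity)

theorem mul_rpow_neg_sub_le_mul_shellTerm (hα : d ≤ 2 * α) (j : ℕ) :
    d * (((j : ℝ) + 1) ^ (-(2 * α - d)) - ((j : ℝ) + 2) ^ (-(2 * α - d))) ≤
      (2 * α - d) * shellTerm d α j := by
  simpa only [shellTerm, Real.rpow_natCast, add_sub_cancel] using
    mul_rpow_neg_sub_rpow_neg_le (x := (j : ℝ) + 1) (y := (j : ℝ) + 2) (p := d) (by positivity)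
      (by positivity) (Nat.cast_nonneg d) (sub_nonneg.2 hα)

theorem mul_shellTerm_le_mul_rpow_neg_sub (hα : d ≤ 2 * α) (j : ℕ) :
    (2 * α - d) * shellTerm d α j ≤
      2 ^ (2 * α) *
        (d * (((j : ℝ) + 1) ^ (-(2 * α - d)) - ((j : ℝ) + 2) ^ (-(2 * α - d)))) := by
  have hα0 : 0 ≤ 2 * α := (Nat.cast_nonneg d).trans hα
  have hdecay : ((j : ℝ) + 1) ^ (-(2 * α)) ≤ 2 ^ (2 * α) * ((j : ℝ) + 2) ^ (-(2 * α)) :=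
    calc ((j : ℝ) + 1) ^ (-(2 * α)) ≤ (((j : ℝ) + 2) / 2) ^ (-(2 * α)) :=
          Real.rpow_le_rpow_of_nonpos (by positivity) (by linarith) (neg_nonpos.2 hα0)
      _ = 2 ^ (2 * α) * ((j : ℝ) + 2) ^ (-(2 * α)) := by
          rw [Real.div_rpow (by positivity) zero_le_two, Real.rpow_neg zero_le_two,
            div_inv_eq_mul, mul_comm]
  have htelescope : (2 * α - d) * ((((j : ℝ) + 2) ^ d - ((j : ℝ) + 1) ^ d) *
      ((j : ℝ) + 2) ^ (-(2 * α))) ≤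
        d * (((j : ℝ) + 1) ^ (-(2 * α - d)) - ((j : ℝ) + 2) ^ (-(2 * α - d))) := by
    have h := mul_rpow_neg_sub_rpow_neg_le (x := (j : ℝ) + 2) (y := (j : ℝ) + 1) (p := d)
      (by positivity) (by positivity) (Nat.cast_nonneg d) (sub_nonneg.2 hα)
    simp only [Real.rpow_natCast, add_sub_cancel] at h
    linarith
  calc (2 * α - d) * shellTerm d α j
      ≤ (2 * α - d) * ((((j : ℝ) + 2) ^ d - ((j : ℝ) + 1) ^ d) *
          (2 ^ (2 * α) * ((j : ℝ) + 2) ^ (-(2 * α)))) :=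
        mul_le_mul_of_nonneg_left (mul_le_mul_of_nonneg_left hdecay (shell_increment_nonneg d j))
          (sub_nonneg.2 hα)
    _ = 2 ^ (2 * α) * ((2 * α - d) * ((((j : ℝ) + 2) ^ d - ((j : ℝ) + 1) ^ d) *
          ((j : ℝ) + 2) ^ (-(2 * α)))) := by ring
    _ ≤ _ := mul_le_mul_of_nonneg_left htelescope (by positivity)

theorem summable_shellTerm (hα : d < 2 * α) : Summable (shellTerm d α) := by
  have hgap : 0 < 2 * α - d := sub_pos.2 hα
  rw [← summable_mul_left_iff hgap.ne']
  exact .of_nonneg_of_le (fun j ↦ mul_nonneg hgap.le (shellTerm_nonneg d α j))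
    (mul_shellTerm_le_mul_rpow_neg_sub hα.le)
    (((hasSum_rpow_neg_sub_rpow_neg hgap).summable.mul_left _).mul_left _)

theorem div_sub_le_shellSum (hα : d < 2 * α) : 2 * α / (2 * α - d) ≤ shellSum d α := by
  have hgap : 0 < 2 * α - d := sub_pos.2 hα
  have hsum : d * 1 ≤ (2 * α - d) * ∑' j, shellTerm d α j :=
    hasSum_le (mul_rpow_neg_sub_le_mul_shellTerm hα.le)
      ((hasSum_rpow_neg_sub_rpow_neg hgap).mul_left _) ((summable_shellTerm hα).hasSum.mul_left _)
  rw [div_le_iff₀ hgap, shellSum]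
  linarith

theorem two_pow_le_shellSum (hα : d < 2 * α) : 2 ^ d ≤ shellSum d α := by
  have hzero : shellTerm d α 0 = 2 ^ d - 1 := by simp [shellTerm]
  have hle := (summable_shellTerm hα).le_tsum 0 fun j _ ↦ shellTerm_nonneg d α j
  rw [shellSum]
  linarith

/- Capping the exponent `b` at `d + 1` is what keeps the factor `2 ^ (b / 2)`, lost when
`1 + t ^ 2` is compared with `(1 + t) ^ 2`, independent of `α`. -/
theorem exists_div_sub_le_shellSum (hα : d < 2 * α) :
    ∃ b : ℝ, d < b ∧ b ≤ 2 * α ∧ b ≤ d + 1 ∧ b / (b - d) ≤ shellSum d α := by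
  rcases le_total (2 * α) (d + 1) with hsmall | hlarge
  · exact ⟨2 * α, hα, le_rfl, hsmall, div_sub_le_shellSum hα⟩
  · refine ⟨d + 1, lt_add_one _, hlarge, le_rfl, ?_⟩
    rw [add_sub_cancel_left, div_one]
    exact le_trans (mod_cast Nat.lt_two_pow_self) (two_pow_le_shellSum hα)

end ShellSum

section QuasiInterpolation

variable {E : Type*} [NormedAddCommGroup E] [NormedSpace ℝ E] [FiniteDimensional ℝ E]
  [Nontrivial E]

theorem sum_one_add_norm_sq_rpow_neg_le_shellSum {ι : Type*} {s : Finset ι} {p : ι → E}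
    {q α : ℝ} (hq : 0 < q) (hq2 : q ≤ 2)
    (hsep : ∀ i ∈ s, ∀ j ∈ s, i ≠ j → q ≤ ‖p i - p j‖) (hα : finrank ℝ E < 2 * α) :
    ∑ i ∈ s, (1 + ‖p i‖ ^ 2) ^ (-α) ≤
      2 ^ ((3 * (finrank ℝ E : ℝ) + 1) / 2) * q⁻¹ ^ finrank ℝ E * shellSum (finrank ℝ E) α := by
  obtain ⟨b, hb, hbα, hbd, hshell⟩ := exists_div_sub_le_shellSum hα
  have hexp : (2 : ℝ) ^ (((finrank ℝ E : ℝ) + 1) / 2) * 2 ^ finrank ℝ E =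
      2 ^ ((3 * (finrank ℝ E : ℝ) + 1) / 2) := by
    rw [← Real.rpow_natCast, ← Real.rpow_add two_pos]
    congr 1
    ring
  calc ∑ i ∈ s, (1 + ‖p i‖ ^ 2) ^ (-α)
      ≤ 2 ^ (b / 2) * (2 / q) ^ finrank ℝ E * (b / (b - finrank ℝ E)) :=
        sum_one_add_norm_sq_rpow_neg_le hq hq2 hsep hb hbα
    _ ≤ 2 ^ (((finrank ℝ E : ℝ) + 1) / 2) * (2 / q) ^ finrank ℝ E * shellSum (finrank ℝ E) α := by
        have hratio : 0 ≤ b / (b - finrank ℝ E) :=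
          div_nonneg ((Nat.cast_nonneg _).trans hb.le) (sub_nonneg.2 hb.le)
        gcongr
        exact one_le_two
    _ = _ := by rw [div_eq_mul_inv 2 q, mul_pow, ← mul_assoc, hexp]

theorem sum_kernel_le_shellSum {s : Finset E} {K : E → ℝ} {c C h κ α : ℝ} (hc : 0 < c)
    (hcC : c ≤ 2 * C) (hh : 0 < h) (hsep : ∀ x ∈ s, ∀ y ∈ s, x ≠ y → c * h ≤ ‖x - y‖)
    (hκ : 0 ≤ κ) (hα : finrank ℝ E < 2 * α) (hK : ∀ x, K x ≤ κ * (1 + ‖x‖ ^ 2) ^ (-α)) (x : E) :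
    ∑ y ∈ s, K ((C * h)⁻¹ • (x - y)) ≤
      κ * (2 ^ ((3 * (finrank ℝ E : ℝ) + 3) / 2) * (C / c) ^ finrank ℝ E) *
        shellSum (finrank ℝ E) α := by
  have hC : 0 < C := by linarith
  have hCh : 0 < C * h := mul_pos hC hh
  have hscaled : ∀ y ∈ s, ∀ z ∈ s, y ≠ z →
      c / C ≤ ‖(C * h)⁻¹ • (x - y) - (C * h)⁻¹ • (x - z)‖ := fun y hy z hz hyz ↦ by
    rw [← smul_sub, sub_sub_sub_cancel_left, norm_smul_of_nonneg (inv_nonneg.2 hCh.le),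
      ← mul_div_mul_right c C hh.ne', div_eq_inv_mul]
    gcongr
    exact hsep z hz y hy hyz.symm
  have hshell : 0 ≤ shellSum (finrank ℝ E) α := (pow_nonneg zero_le_two _).trans
    (two_pow_le_shellSum hα)
  calc ∑ y ∈ s, K ((C * h)⁻¹ • (x - y))
      ≤ ∑ y ∈ s, κ * (1 + ‖(C * h)⁻¹ • (x - y)‖ ^ 2) ^ (-α) := Finset.sum_le_sum fun y _ ↦ hK _
    _ = κ * ∑ y ∈ s, (1 + ‖(C * h)⁻¹ • (x - y)‖ ^ 2) ^ (-α) := (Finset.mul_sum ..).symm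
    _ ≤ κ * (2 ^ ((3 * (finrank ℝ E : ℝ) + 1) / 2) * (c / C)⁻¹ ^ finrank ℝ E *
          shellSum (finrank ℝ E) α) := by
        gcongr
        exact sum_one_add_norm_sq_rpow_neg_le_shellSum (div_pos hc hC) ((div_le_iff₀ hC).2 hcC)
          hscaled hα
    _ ≤ κ * (2 ^ ((3 * (finrank ℝ E : ℝ) + 3) / 2) * (C / c) ^ finrank ℝ E *
          shellSum (finrank ℝ E) α) := by
        rw [inv_div]
        gcongr <;> norm_num
    _ = _ := (mul_assoc ..).symm

end QuasiInterpolation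

theorem abs_sum_mul_le_sum_mul {ι : Type*} {s : Finset ι} {f w : ι → ℝ} {M : ℝ}
    (hf : ∀ i ∈ s, |f i| ≤ M) (hw : ∀ i ∈ s, 0 ≤ w i) :
    |∑ i ∈ s, f i * w i| ≤ (∑ i ∈ s, w i) * M := by
  rw [Finset.sum_mul]
  refine (Finset.abs_sum_le_sum_abs _ _).trans (Finset.sum_le_sum fun i hi ↦ ?_)
  rw [abs_mul, abs_of_nonneg (hw i hi), mul_comm]
  exact mul_le_mul_of_nonneg_left (hf i hi) (hw i hi)

theorem shepard_operator_uniform_bound_general {E : Type*} [NormedAddCommGroup E]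
    [NormedSpace ℝ E] [FiniteDimensional ℝ E] [Nontrivial E] {X : Set E} {Xn : Finset E}
    (hXnX : ↑Xn ⊆ X) {c C h : ℝ} (hc : 0 < c) (hcC : c ≤ 2 * C) (hh : 0 < h)
    (hsep : ∀ x ∈ Xn, ∀ y ∈ Xn, x ≠ y → c * h ≤ ‖x - y‖)
    {κ α : ℝ} (hκ : 0 ≤ κ) (hα : finrank ℝ E < 2 * α) {K : E → ℝ} (hKnonneg : ∀ x, 0 ≤ K x)
    (hKdecay : ∀ x, K x ≤ κ * (1 + ‖x‖ ^ 2) ^ (-α)) :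
    (∀ x, ∑ y ∈ Xn, K ((C * h)⁻¹ • (x - y)) ≤
      κ * (2 ^ ((3 * (finrank ℝ E : ℝ) + 3) / 2) * (C / c) ^ finrank ℝ E) *
        shellSum (finrank ℝ E) α) ∧
    ∀ (f : E → ℝ) (M : ℝ), (∀ y ∈ X, |f y| ≤ M) →
      ∀ x ∈ X, |∑ y ∈ Xn, f y * K ((C * h)⁻¹ • (x - y))| ≤
        κ * (2 ^ ((3 * (finrank ℝ E : ℝ) + 3) / 2) * (C / c) ^ finrank ℝ E) *
          shellSum (finrank ℝ E) α * M := by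
  have hkernel := sum_kernel_le_shellSum hc hcC hh hsep hκ hα hKdecay
  refine ⟨hkernel, fun f M hf x hx ↦ ?_⟩
  exact (abs_sum_mul_le_sum_mul (fun y hy ↦ hf y (hXnX hy)) fun y _ ↦ hKnonneg _).trans
    (mul_le_mul_of_nonneg_right (hkernel x) ((abs_nonneg _).trans (hf x hx)))

theorem shepard_operator_uniform_bound (d n : ℕ) (hd : 1 ≤ d) (hn : 1 ≤ n)
    (X : Set (EuclideanSpace ℝ (Fin d))) (hX : Convex ℝ X) (c C : ℝ) (hc : 0 < c)
    (hcC : c ≤ 2 * C) (Xn : Finset (EuclideanSpace ℝ (Fin d))) (hXnX : ↑Xn ⊆ X)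
    (hsep : ∀ x ∈ Xn, ∀ y ∈ Xn, x ≠ y → c * (n : ℝ) ^ (-(1 : ℝ) / d) ≤ ‖x - y‖)
    (hfill : ∀ x ∈ X, ∃ y ∈ Xn, ‖x - y‖ ≤ C * (n : ℝ) ^ (-(1 : ℝ) / d))
    (κ α : ℝ) (hκ : 0 < κ) (hα : ((d : ℝ) + 1) / 2 < α)
    (K : EuclideanSpace ℝ (Fin d) → ℝ) (hKcont : Continuous K) (hKnonneg : ∀ x, 0 ≤ K x)
    (hm₁pos : 0 < sInf (K '' closedBall (0 : EuclideanSpace ℝ (Fin d)) 1))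
    (hKdecay : ∀ x, K x ≤ κ * (1 + ‖x‖ ^ 2) ^ (-α)) :
    (∀ x ∈ X, ∑ y ∈ Xn, K ((C⁻¹ * (n : ℝ) ^ ((1 : ℝ) / d)) • (x - y)) ≤
      κ * ((2 : ℝ) ^ ((3 * (d : ℝ) + 3) / 2) * (C / c) ^ d) *
        (1 + ∑' j : ℕ, (((j : ℝ) + 2) ^ d - ((j : ℝ) + 1) ^ d) * ((j : ℝ) + 1) ^ (-(2 * α)))) ∧
    ∀ (f : EuclideanSpace ℝ (Fin d) → ℝ) (M : ℝ), (∀ y ∈ X, |f y| ≤ M) →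
      ∀ x ∈ X, |∑ y ∈ Xn, f y * K ((C⁻¹ * (n : ℝ) ^ ((1 : ℝ) / d)) • (x - y))| ≤
        κ * ((2 : ℝ) ^ ((3 * (d : ℝ) + 3) / 2) * (C / c) ^ d) *
          (1 + ∑' j : ℕ, (((j : ℝ) + 2) ^ d - ((j : ℝ) + 1) ^ d) * ((j : ℝ) + 1) ^ (-(2 * α))) *
          M := by
  have : NeZero d := ⟨Nat.one_le_iff_ne_zero.1 hd⟩
  have hh : (0 : ℝ) < (n : ℝ) ^ (-(1 : ℝ) / d) := Real.rpow_pos_of_pos (Nat.cast_pos.2 hn) _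
  have hscale : C⁻¹ * (n : ℝ) ^ ((1 : ℝ) / d) = (C * (n : ℝ) ^ (-(1 : ℝ) / d))⁻¹ := by
    rw [mul_inv, neg_div, Real.rpow_neg n.cast_nonneg, inv_inv]
  have hbound := shepard_operator_uniform_bound_general hXnX hc hcC hh hsep hκ.le
    (by rw [finrank_euclideanSpace_fin]; linarith) hKnonneg hKdecay
  rw [finrank_euclideanSpace_fin, ← hscale] at hbound
  exact ⟨fun x _ ↦ hbound.1 x, hbound.2⟩
end

section
/- Let d ≥ 1, n ≥ 1, and let c, C be constants with 0 < c ≤ 2C. Let 𝒳ₙ ⊂ ℝ^d be a set in which any two distinct points are at Euclidean distance at least c·n^{−1/d}. Fix any center x₀ ∈ ℝ^d and for each integer j ≥ 1 let 𝒜_{n,j} := {y ∈ ℝ^d : (j−1)·C·n^{−1/d} ≤ |y − x₀| < j·C·n^{−1/d}} be the j-th concentric annulus of thickness C·n^{−1/d}. Then the number of points of 𝒳ₙ lying in 𝒜_{n,j} satisfies |𝒳ₙ ∩ 𝒜_{n,j}| ≤ K_d · [j^d − (j−1)^d], where K_d := 2^{(3d+3)/2} (C/c)^d. -/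
/-!
Put `ρ = c / 2`. The balls of radius `ρ` around the points of a `c`-separated set are disjoint. When
the annulus has width at least `ρ` and contains `x`, the part of `ball x ρ` inside the annulus
contains an ellipsoid of revolution about the line through the centre of the annulus and `x`, with
radial semi-axis `ρ / 2` and all other semi-axes `ρ / √2`. It has `(√2)⁻¹ * (ρ / √2) ^ d` times the
volume of the unit ball, and comparing volumes bounds the number of points.
-/

open MeasureTheory Metric Module
open scoped ENNReal

section Packing

variable {ι α : Type*} {mα : MeasurableSpace α} {μ : Measure α}

lemma encard_mul_le_measure {s : Set ι} {U : ι → Set α} {A : Set α} {a : ℝ≥0∞}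
    (hU : ∀ i ∈ s, MeasurableSet (U i)) (hdisj : s.PairwiseDisjoint U)
    (hUA : ∀ i ∈ s, U i ⊆ A) (ha : ∀ i ∈ s, a ≤ μ (U i)) :
    (s.encard : ℝ≥0∞) * a ≤ μ A :=
  calc (s.encard : ℝ≥0∞) * a = ∑' _ : s, a := (ENNReal.tsum_set_const s a).symm
    _ ≤ ∑' i : s, μ (U i) := ENNReal.tsum_le_tsum fun i => ha i i.2
    _ ≤ μ (⋃ i : s, U i) := tsum_meas_le_meas_iUnion_of_disjoint μ (fun i => hU i i.2)
        fun i j hij => hdisj i.2 j.2 (Subtype.coe_injective.ne hij)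
    _ ≤ μ A := measure_mono (Set.iUnion_subset fun i => hUA i i.2)

lemma finite_and_ncard_mul_le_of_encard_mul_le {s : Set ι} {a b : ℝ} (ha : 0 < a) (hb : 0 ≤ b)
    (h : (s.encard : ℝ≥0∞) * ENNReal.ofReal a ≤ ENNReal.ofReal b) :
    s.Finite ∧ s.ncard * a ≤ b := by
  have hs : s.Finite := by
    rw [← Set.encard_ne_top_iff]
    intro htop
    rw [htop, ENat.toENNReal_top, ENNReal.top_mul (ENNReal.ofReal_pos.2 ha).ne'] at h
    exact ENNReal.ofReal_ne_top (top_le_iff.1 h)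
  rw [← hs.cast_ncard_eq, ENat.toENNReal_coe, ← ENNReal.ofReal_natCast,
    ← ENNReal.ofReal_mul (Nat.cast_nonneg _), ENNReal.ofReal_le_ofReal_iff hb] at h
  exact ⟨hs, h⟩

end Packing

lemma exists_mem_Icc_abs_sub_le {P Q ρ r : ℝ} (hρ : 0 ≤ ρ) (hPQ : P + ρ ≤ Q)
    (hr : r ∈ Set.Icc P Q) :
    ∃ t ∈ Set.Icc (P + ρ / 2) (Q - ρ / 2), |t - r| ≤ ρ / 2 := by
  obtain ⟨hPr, hrQ⟩ := hr
  refine ⟨max (P + ρ / 2) (min r (Q - ρ / 2)),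
    ⟨le_max_left _ _, max_le (by linarith) (min_le_right _ _)⟩, abs_le.2 ⟨?_, ?_⟩⟩
  · have : r - ρ / 2 ≤ min r (Q - ρ / 2) := le_min (by linarith) (by linarith)
    linarith [this.trans (le_max_right (P + ρ / 2) _)]
  · have : max (P + ρ / 2) (min r (Q - ρ / 2)) ≤ r + ρ / 2 :=
      max_le (by linarith) ((min_le_left _ _).trans (by linarith))
    linarith

section Annulus

variable {V : Type*} [NormedAddCommGroup V]

/-- The half-open annulus (spherical shell) with centre `x₀`, containing its inner sphere of radius
`P` but not its outer sphere of radius `Q`. -/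
def annulus (x₀ : V) (P Q : ℝ) : Set V := {y | P ≤ ‖y - x₀‖ ∧ ‖y - x₀‖ < Q}

lemma annulus_eq_ball_sdiff_ball (x₀ : V) (P Q : ℝ) : annulus x₀ P Q = ball x₀ Q \ ball x₀ P := by
  ext y
  simp [annulus, dist_eq_norm, and_comm]

lemma measurableSet_annulus [MeasurableSpace V] [BorelSpace V] (x₀ : V) (P Q : ℝ) :
    MeasurableSet (annulus x₀ P Q) := by
  rw [annulus_eq_ball_sdiff_ball]
  exact measurableSet_ball.diff measurableSet_ball

variable [NormedSpace ℝ V] [Nontrivial V]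

lemma exists_norm_eq_one_and_norm_smul_eq (x : V) : ∃ e : V, ‖e‖ = 1 ∧ ‖x‖ • e = x := by
  rcases eq_or_ne x 0 with rfl | hx
  · obtain ⟨e, he⟩ := exists_norm_eq V zero_le_one
    exact ⟨e, he, by simp⟩
  · exact ⟨NormedSpace.normalize x, NormedSpace.norm_normalize hx,
      NormedSpace.norm_smul_normalize x⟩

lemma addHaar_annulus [FiniteDimensional ℝ V] [MeasurableSpace V] [BorelSpace V] (μ : Measure V)
    [μ.IsAddHaarMeasure] (x₀ : V) {P Q : ℝ} (hP : 0 ≤ P) (hPQ : P ≤ Q) :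
    μ (annulus x₀ P Q) =
      ENNReal.ofReal (Q ^ finrank ℝ V - P ^ finrank ℝ V) * μ (ball 0 1) := by
  rw [annulus_eq_ball_sdiff_ball, measure_sdiff (ball_subset_ball hPQ)
    measurableSet_ball.nullMeasurableSet measure_ball_lt_top.ne, μ.addHaar_ball x₀ (hP.trans hPQ),
    μ.addHaar_ball x₀ hP, ENNReal.ofReal_sub _ (by positivity),
    ENNReal.sub_mul fun _ _ => measure_ball_lt_top.ne]

end Annulus

section OblateEllipsoid

variable {V : Type*} [NormedAddCommGroup V] [InnerProductSpace ℝ V]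

/-- For a unit vector `e`, the linear map scaling by `a` along `e` and fixing the orthogonal
complement of `e`. -/
noncomputable def axialScaling (e : V) (a : ℝ) : V →ₗ[ℝ] V :=
  LinearMap.transvection ((a - 1) • innerₛₗ ℝ e) e

lemma axialScaling_apply (e : V) (a : ℝ) (w : V) :
    axialScaling e a w = w + ((a - 1) * inner ℝ e w) • e := by
  simp [axialScaling, LinearMap.transvection.apply]

lemma det_axialScaling [FiniteDimensional ℝ V] {e : V} (he : ‖e‖ = 1) (a : ℝ) :
    LinearMap.det (axialScaling e a) = a := by
  simp [axialScaling, LinearMap.transvection.det, he]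

lemma inner_smul_add_axialScaling {e : V} (he : ‖e‖ = 1) (s a : ℝ) (w : V) :
    inner ℝ e (s • e + axialScaling e a w) = s + a * inner ℝ e w := by
  simp only [axialScaling_apply, inner_add_right, real_inner_smul_right, real_inner_self_eq_norm_sq,
    he]
  ring

lemma norm_sq_smul_add_axialScaling {e : V} (he : ‖e‖ = 1) (s a : ℝ) (w : V) :
    ‖s • e + axialScaling e a w‖ ^ 2 = (s + a * inner ℝ e w) ^ 2 + (‖w‖ ^ 2 - inner ℝ e w ^ 2) := by
  simp only [axialScaling_apply, ← real_inner_self_eq_norm_sq, inner_add_left, inner_add_right,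
    real_inner_smul_left, real_inner_smul_right, real_inner_comm e w]
  simp only [real_inner_self_eq_norm_sq, he]
  ring

/-- For a unit vector `e`, the open ellipsoid of revolution centred at the origin with semi-axis
`ρ / 2` along `e` and all other semi-axes `ρ / √2`. With these semi-axes it stays in `ball 0 ρ` when
translated along `e` by at most `ρ / 2`. -/
def oblateEllipsoid (e : V) (ρ : ℝ) : Set V := axialScaling e (√2)⁻¹ '' ball 0 (ρ / √2)

variable {e z : V} {ρ t : ℝ}

lemma pos_of_mem_oblateEllipsoid (hz : z ∈ oblateEllipsoid e ρ) : 0 < ρ := by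
  obtain ⟨w, hw, -⟩ := hz
  exact (div_pos_iff_of_pos_right (by positivity)).1 (pos_of_mem_ball hw)

lemma norm_smul_add_lt_of_mem_oblateEllipsoid (he : ‖e‖ = 1) (hz : z ∈ oblateEllipsoid e ρ)
    (ht : |t| ≤ ρ / 2) : ‖t • e + z‖ < ρ := by
  have hρ := (pos_of_mem_oblateEllipsoid hz).le
  obtain ⟨w, hw, rfl⟩ := hz
  have hw2 : ‖w‖ ^ 2 < ρ ^ 2 / 2 := by
    rw [mem_ball_zero_iff] at hw
    calc ‖w‖ ^ 2 < (ρ / √2) ^ 2 := by gcongr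
      _ = ρ ^ 2 / 2 := by rw [div_pow, Real.sq_sqrt zero_le_two]
  have ht2 : t ^ 2 ≤ (ρ / 2) ^ 2 := sq_le_sq' (abs_le.1 ht).1 (abs_le.1 ht).2
  refine lt_of_pow_lt_pow_left₀ 2 hρ ?_
  calc ‖t • e + axialScaling e (√2)⁻¹ w‖ ^ 2
      = (t + (√2)⁻¹ * inner ℝ e w) ^ 2 + (‖w‖ ^ 2 - inner ℝ e w ^ 2) :=
        norm_sq_smul_add_axialScaling he t _ w
    _ ≤ 2 * (t ^ 2 + ((√2)⁻¹ * inner ℝ e w) ^ 2) + (‖w‖ ^ 2 - inner ℝ e w ^ 2) := by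
        gcongr
        exact add_sq_le
    _ = 2 * t ^ 2 + ‖w‖ ^ 2 := by
        rw [mul_pow, inv_pow, Real.sq_sqrt zero_le_two]
        ring
    _ < ρ ^ 2 := by linarith

lemma sub_lt_norm_smul_add_of_mem_oblateEllipsoid (he : ‖e‖ = 1) (hz : z ∈ oblateEllipsoid e ρ) :
    t - ρ / 2 < ‖t • e + z‖ := by
  obtain ⟨w, hw, rfl⟩ := hz
  have hinner : |(√2)⁻¹ * inner ℝ e w| < ρ / 2 := by
    rw [mem_ball_zero_iff] at hw
    calc |(√2)⁻¹ * inner ℝ e w| = (√2)⁻¹ * |inner ℝ e w| := by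
          rw [abs_mul, abs_of_pos (by positivity)]
      _ ≤ (√2)⁻¹ * ‖w‖ := by
          gcongr
          simpa [he] using abs_real_inner_le_norm e w
      _ < (√2)⁻¹ * (ρ / √2) := by gcongr
      _ = ρ / 2 := by
          rw [inv_mul_eq_div, div_div, Real.mul_self_sqrt zero_le_two]
  calc t - ρ / 2 < t + (√2)⁻¹ * inner ℝ e w := by linarith [(abs_lt.1 hinner).1]
    _ = inner ℝ e (t • e + axialScaling e (√2)⁻¹ w) := (inner_smul_add_axialScaling he t _ w).symm
    _ ≤ ‖t • e + axialScaling e (√2)⁻¹ w‖ := by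
        simpa [he] using real_inner_le_norm e (t • e + axialScaling e (√2)⁻¹ w)

lemma norm_smul_add_lt_add_of_mem_oblateEllipsoid (he : ‖e‖ = 1) (hz : z ∈ oblateEllipsoid e ρ)
    (ht : ρ / 2 ≤ t) : ‖t • e + z‖ < t + ρ / 2 := by
  have hρ := pos_of_mem_oblateEllipsoid hz
  calc ‖t • e + z‖ = ‖(t - ρ / 2) • e + ((ρ / 2) • e + z)‖ := by
        rw [← add_assoc, ← add_smul, sub_add_cancel]
    _ ≤ ‖(t - ρ / 2) • e‖ + ‖(ρ / 2) • e + z‖ := norm_add_le _ _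
    _ < (t - ρ / 2) + ρ := by
        rw [norm_smul, he, mul_one, Real.norm_of_nonneg (by linarith)]
        gcongr
        exact norm_smul_add_lt_of_mem_oblateEllipsoid he hz (abs_of_nonneg (by linarith)).le
    _ = t + ρ / 2 := by ring

lemma exists_image_oblateEllipsoid_subset [Nontrivial V] {x x₀ : V} {P Q : ℝ} (hP : 0 ≤ P)
    (hρ : 0 ≤ ρ) (hPQ : P + ρ ≤ Q) (hx : x ∈ annulus x₀ P Q) :
    ∃ p e : V, ‖e‖ = 1 ∧ (p + ·) '' oblateEllipsoid e ρ ⊆ ball x ρ ∩ annulus x₀ P Q := by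
  obtain ⟨e, he, hxe⟩ := exists_norm_eq_one_and_norm_smul_eq (x - x₀)
  obtain ⟨t, ⟨hPt, htQ⟩, htx⟩ := exists_mem_Icc_abs_sub_le hρ hPQ ⟨hx.1, hx.2.le⟩
  refine ⟨x₀ + t • e, e, he, ?_⟩
  rintro _ ⟨z, hz, rfl⟩
  have hyx : x₀ + t • e + z - x = (t - ‖x - x₀‖) • e + z := by
    rw [sub_smul, hxe]
    abel
  have hyx₀ : x₀ + t • e + z - x₀ = t • e + z := by abel
  refine ⟨?_, ?_, ?_⟩
  · rw [mem_ball_iff_norm, hyx]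
    exact norm_smul_add_lt_of_mem_oblateEllipsoid he hz htx
  · rw [hyx₀]
    linarith [sub_lt_norm_smul_add_of_mem_oblateEllipsoid (t := t) he hz]
  · rw [hyx₀]
    linarith [norm_smul_add_lt_add_of_mem_oblateEllipsoid (t := t) he hz (by linarith)]

variable [FiniteDimensional ℝ V] [MeasurableSpace V] [BorelSpace V] (μ : Measure V)
  [μ.IsAddHaarMeasure]

lemma addHaar_oblateEllipsoid (he : ‖e‖ = 1) (hρ : 0 < ρ) :
    μ (oblateEllipsoid e ρ) =
      ENNReal.ofReal ((√2)⁻¹ * (ρ / √2) ^ finrank ℝ V) * μ (ball 0 1) := by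
  rw [oblateEllipsoid, μ.addHaar_image_linearMap, det_axialScaling he, abs_of_pos (by positivity),
    μ.addHaar_ball_of_pos 0 (by positivity), ← mul_assoc, ← ENNReal.ofReal_mul (by positivity)]

lemma le_addHaar_ball_inter_annulus [Nontrivial V] {x x₀ : V} {P Q : ℝ} (hP : 0 ≤ P) (hρ : 0 < ρ)
    (hPQ : P + ρ ≤ Q) (hx : x ∈ annulus x₀ P Q) :
    ENNReal.ofReal ((√2)⁻¹ * (ρ / √2) ^ finrank ℝ V) * μ (ball 0 1) ≤
      μ (ball x ρ ∩ annulus x₀ P Q) := by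
  obtain ⟨p, e, he, hsub⟩ := exists_image_oblateEllipsoid_subset hP hρ.le hPQ hx
  rw [← addHaar_oblateEllipsoid μ he hρ]
  calc μ (oblateEllipsoid e ρ) = μ ((p + ·) '' oblateEllipsoid e ρ) := by
        rw [Set.image_add_left, measure_preimage_add]
    _ ≤ μ (ball x ρ ∩ annulus x₀ P Q) := measure_mono hsub

end OblateEllipsoid

section Counting

variable {V : Type*} [NormedAddCommGroup V] [InnerProductSpace ℝ V] [FiniteDimensional ℝ V]
  [Nontrivial V]

lemma finite_and_ncard_mul_le_of_separated_of_subset_annulus {S : Set V} {x₀ : V} {P Q ρ : ℝ}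
    (hP : 0 ≤ P) (hρ : 0 < ρ) (hPQ : P + ρ ≤ Q) (hS : S ⊆ annulus x₀ P Q)
    (hsep : S.Pairwise fun x y => 2 * ρ ≤ ‖x - y‖) :
    S.Finite ∧ S.ncard * ((√2)⁻¹ * (ρ / √2) ^ finrank ℝ V) ≤
      Q ^ finrank ℝ V - P ^ finrank ℝ V := by
  borelize V
  let μ : Measure V := Measure.addHaar
  have hdisj : S.PairwiseDisjoint fun x => ball x ρ ∩ annulus x₀ P Q := fun x hx y hy hxy =>
    (ball_disjoint_ball (by rw [dist_eq_norm]; linarith [hsep hx hy hxy])).mono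
      Set.inter_subset_left Set.inter_subset_left
  have hvol := encard_mul_le_measure
    (fun x _ => measurableSet_ball.inter (measurableSet_annulus x₀ P Q)) hdisj
    (fun _ _ => Set.inter_subset_right)
    fun x hx => le_addHaar_ball_inter_annulus μ hP hρ hPQ (hS hx)
  rw [addHaar_annulus μ x₀ hP (by linarith), ← mul_assoc,
    ENNReal.mul_le_mul_iff_left (measure_ball_pos μ 0 one_pos).ne' measure_ball_lt_top.ne] at hvol
  exact finite_and_ncard_mul_le_of_encard_mul_le (by positivity)
    (sub_nonneg.2 (pow_le_pow_left₀ hP (by linarith) _)) hvol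

lemma two_rpow_three_mul_add_one_div_two (d : ℕ) :
    (2 : ℝ) ^ ((3 * (d : ℝ) + 1) / 2) = √2 * (2 * √2) ^ d := by
  have hexp : (3 * (d : ℝ) + 1) / 2 = 1 / 2 + (1 + 1 / 2) * d := by ring
  rw [hexp, Real.rpow_add two_pos, Real.rpow_mul_natCast zero_le_two, Real.rpow_add two_pos,
    Real.rpow_one, ← Real.sqrt_eq_rpow]

theorem annulus_point_count_general {c C : ℝ} (hc : 0 < c) (hcC : c ≤ 2 * C) {X : Set V}
    (hsep : X.Pairwise fun x y => c ≤ ‖x - y‖) (x₀ : V) {t : ℝ} (ht : 1 ≤ t) :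
    (X ∩ annulus x₀ ((t - 1) * C) (t * C)).Finite ∧
      (X ∩ annulus x₀ ((t - 1) * C) (t * C)).ncard ≤
        (2 : ℝ) ^ ((3 * (finrank ℝ V : ℝ) + 1) / 2) * (C / c) ^ finrank ℝ V *
          (t ^ finrank ℝ V - (t - 1) ^ finrank ℝ V) := by
  have hC : 0 ≤ C := by linarith
  obtain ⟨hfin, hcount⟩ := finite_and_ncard_mul_le_of_separated_of_subset_annulus (ρ := c / 2)
    (P := (t - 1) * C) (Q := t * C) (mul_nonneg (sub_nonneg.2 ht) hC) (half_pos hc) (by linarith)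
    Set.inter_subset_right
    ((hsep.mono Set.inter_subset_left).imp fun _ _ h => (mul_div_cancel₀ c two_ne_zero).trans_le h)
  refine ⟨hfin, ?_⟩
  rw [← le_div_iff₀ (by positivity)] at hcount
  refine hcount.trans_eq ?_
  have hvol : (√2)⁻¹ * (c / 2 / √2) ^ finrank ℝ V =
      c ^ finrank ℝ V / (√2 * (2 * √2) ^ finrank ℝ V) := by
    rw [div_div, div_pow, inv_mul_eq_div, div_div, mul_comm]
  rw [hvol, two_rpow_three_mul_add_one_div_two, mul_pow t, mul_pow (t - 1), div_pow]
  field_simp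

end Counting

theorem annulus_point_count (d n : ℕ) (hd : 1 ≤ d) (hn : 1 ≤ n) (c C : ℝ) (hc : 0 < c)
    (hcC : c ≤ 2 * C) (Xn : Set (EuclideanSpace ℝ (Fin d)))
    (hsep : ∀ x ∈ Xn, ∀ y ∈ Xn, x ≠ y → c * (n : ℝ) ^ (-(1 : ℝ) / d) ≤ ‖x - y‖)
    (x₀ : EuclideanSpace ℝ (Fin d)) (j : ℕ) (hj : 1 ≤ j) :
    ((Xn ∩ {y : EuclideanSpace ℝ (Fin d) |
        ((j : ℝ) - 1) * (C * (n : ℝ) ^ (-(1 : ℝ) / d)) ≤ ‖y - x₀‖ ∧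
        ‖y - x₀‖ < (j : ℝ) * (C * (n : ℝ) ^ (-(1 : ℝ) / d))}).ncard : ℝ) ≤
      (2 : ℝ) ^ ((3 * (d : ℝ) + 3) / 2) * (C / c) ^ d * ((j : ℝ) ^ d - ((j : ℝ) - 1) ^ d) := by
  have : Nontrivial (EuclideanSpace ℝ (Fin d)) :=
    nontrivial_of_finrank_pos (R := ℝ) (by rwa [finrank_euclideanSpace_fin])
  have hscale : 0 < (n : ℝ) ^ (-(1 : ℝ) / d) := Real.rpow_pos_of_pos (mod_cast hn) _
  have hj' : (1 : ℝ) ≤ j := mod_cast hj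
  have hcount := (annulus_point_count_general (mul_pos hc hscale)
    (by rw [← mul_assoc]; gcongr) (fun x hx y hy => hsep x hx y hy) x₀ hj').2
  rw [mul_div_mul_right _ _ hscale.ne', finrank_euclideanSpace_fin] at hcount
  have hpow : 0 ≤ (j : ℝ) ^ d - ((j : ℝ) - 1) ^ d :=
    sub_nonneg.2 (pow_le_pow_left₀ (sub_nonneg.2 hj') (by linarith) d)
  have hC : 0 ≤ C := by linarith
  refine hcount.trans ?_
  gcongr
  · exact one_le_two
  · norm_num
end

section
/- Let d ≥ 1 and δ > 0, and let 𝒳 ⊂ ℝ^d be a set with separation radius δ, i.e., any two distinct points of 𝒳 are at Euclidean distance at least 2δ. Fix a center x₀ ∈ ℝ^d and for an integer j ≥ 1 let 𝒜_{δ,j} := {x ∈ ℝ^d : jδ ≤ |x − x₀| ≤ (j+1)δ} be the annulus of thickness δ and inner radius jδ. Then |𝒳 ∩ 𝒜_{δ,j}| ≤ 2d · j^{d−1} · e^{(5d−3)/(4j−1)}. -/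
/-!
Disjoint balls of radius `δ` centred in the annulus `a ≤ ‖x - x₀‖ ≤ a + δ` need not be contained in
it, but enlarging the annulus a little captures half of each ball. Indeed, for a point `x + v` of
the ball around `x`, membership in `a ≤ ‖y - x₀‖ ≤ b` follows from a two-sided bound on
`⟪x - x₀, v⟫`, that is, from `v` lying in a slab containing `0`. The choice
`b ^ 2 = a ^ 2 + 2 * a * δ + 3 * δ ^ 2` makes the slab at least `δ` thick, and then it contains
half of the ball: half of the ball lies on one side of the hyperplane through the centre, and a
point reflection maps the part of that half beyond the slab into the part of the slab on the other
side. Comparing volumes with `a = j * δ` bounds the number of points by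
`2 * (√(j ^ 2 + 2 * j + 3) ^ d - j ^ d)`, and elementary estimates give the exponential bound.
-/

open MeasureTheory Metric Module
open scoped RealInnerProductSpace

section Slab

variable {E : Type*} [NormedAddCommGroup E] [InnerProductSpace ℝ E]

theorem norm_div_smul_sub_le_norm {w v : E} {q : ℝ} (hq : 0 ≤ q) (hqv : q ≤ ⟪w, v⟫) :
    ‖(q / ‖w‖ ^ 2) • w - v‖ ≤ ‖v‖ := by
  rcases eq_or_ne w 0 with rfl | hw
  · simp
  have hcw : (q / ‖w‖ ^ 2) * ‖w‖ ^ 2 = q := div_mul_cancel₀ q (by positivity)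
  refine le_of_sq_le_sq ?_ (norm_nonneg v)
  calc ‖(q / ‖w‖ ^ 2) • w - v‖ ^ 2
      = q / ‖w‖ ^ 2 * ((q / ‖w‖ ^ 2) * ‖w‖ ^ 2 - 2 * ⟪w, v⟫) + ‖v‖ ^ 2 := by
        rw [norm_sub_sq_real, norm_smul, real_inner_smul_left, mul_pow, Real.norm_eq_abs, sq_abs]
        ring
    _ ≤ ‖v‖ ^ 2 := by
        rw [hcw, add_le_iff_nonpos_left]
        exact mul_nonpos_of_nonneg_of_nonpos (by positivity) (by linarith)

theorem inner_div_smul_sub {w : E} (hw : w ≠ 0) (q : ℝ) (v : E) :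
    ⟪w, (q / ‖w‖ ^ 2) • w - v⟫ = q - ⟪w, v⟫ := by
  have : ‖w‖ ≠ 0 := norm_ne_zero_iff.2 hw
  rw [inner_sub_right, real_inner_smul_right, real_inner_self_eq_norm_sq,
    div_mul_cancel₀ q (by positivity)]

variable [MeasurableSpace E] [BorelSpace E] (μ : Measure E) [μ.IsNegInvariant]

theorem measure_ball_le_two_mul_measure_inter_inner_nonneg (w : E) (ρ : ℝ) :
    μ (ball 0 ρ) ≤ 2 * μ (ball 0 ρ ∩ {v | 0 ≤ ⟪w, v⟫}) := by
  set H := ball 0 ρ ∩ {v | 0 ≤ ⟪w, v⟫}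
  have hcover : ball 0 ρ ⊆ H ∪ Neg.neg ⁻¹' H := by
    intro v hv
    rcases le_total 0 ⟪w, v⟫ with hnonneg | hnonpos
    · exact Or.inl ⟨hv, hnonneg⟩
    · exact Or.inr ⟨by simpa using hv, by simpa [inner_neg_right] using hnonpos⟩
  calc μ (ball 0 ρ) ≤ μ H + μ (Neg.neg ⁻¹' H) :=
        (measure_mono hcover).trans (measure_union_le _ _)
    _ = 2 * μ H := by rw [Measure.measure_preimage_neg, two_mul]

variable [μ.IsAddLeftInvariant]

theorem measure_ball_inter_inner_nonneg_le_measure_inter_slab {w : E} {ρ p q : ℝ}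
    (hp : 0 ≤ p) (hq : 0 ≤ q) (hpq : ρ * ‖w‖ ≤ p + q) :
    μ (ball 0 ρ ∩ {v | 0 ≤ ⟪w, v⟫}) ≤ μ (ball 0 ρ ∩ {v | -p ≤ ⟪w, v⟫ ∧ ⟪w, v⟫ ≤ q}) := by
  set S := ball 0 ρ ∩ {v | -p ≤ ⟪w, v⟫ ∧ ⟪w, v⟫ ≤ q}
  set P := {v | 0 ≤ ⟪w, v⟫}
  set c := (q / ‖w‖ ^ 2) • w
  have hP : MeasurableSet P := (isClosed_le (by fun_prop) (by fun_prop)).measurableSet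
  have hcover : ball 0 ρ ∩ P ⊆ S ∩ P ∪ (c - ·) ⁻¹' (S \ P) := by
    rintro v ⟨hv, hv_nonneg : 0 ≤ ⟪w, v⟫⟩
    rcases le_or_gt ⟪w, v⟫ q with hvq | hqv
    · exact Or.inl ⟨⟨hv, by linarith, hvq⟩, hv_nonneg⟩
    have hw : w ≠ 0 := by
      rintro rfl
      exact (hq.trans_lt hqv).ne' (inner_zero_left v)
    have hvρ : ‖v‖ < ρ := by simpa using hv
    have hinner : ⟪w, c - v⟫ = q - ⟪w, v⟫ := inner_div_smul_sub hw q v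
    have hinner_le : ⟪w, v⟫ ≤ p + q := calc
      ⟪w, v⟫ ≤ ‖w‖ * ‖v‖ := real_inner_le_norm w v
      _ ≤ ‖w‖ * ρ := by gcongr
      _ ≤ p + q := by linarith
    have hmem : ‖c - v‖ < ρ := (norm_div_smul_sub_le_norm hq hqv.le).trans_lt hvρ
    refine Or.inr ⟨⟨by simpa using hmem, ?_, ?_⟩, fun hnonneg : 0 ≤ ⟪w, c - v⟫ => ?_⟩ <;> linarith
  calc μ (ball 0 ρ ∩ P) ≤ μ (S ∩ P) + μ ((c - ·) ⁻¹' (S \ P)) :=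
        (measure_mono hcover).trans (measure_union_le _ _)
    _ = μ (S ∩ P) + μ (S \ P) := by
        rw [(Measure.measurePreserving_sub_left μ c).measure_preimage_emb
          (MeasurableEquiv.subLeft c).measurableEmbedding]
    _ = μ S := measure_inter_add_sdiff S hP

end Slab

/-- The closed annulus (spherical shell) with centre `x₀`, inner radius `a` and outer radius `b`:
the region in which points are counted and whose volume bounds their number. It is empty when
`b < a`, and equal to the closed ball when `a ≤ 0`. -/
def closedAnnulus {E : Type*} [SeminormedAddCommGroup E] (x₀ : E) (a b : ℝ) : Set E :=
  {x | a ≤ ‖x - x₀‖ ∧ ‖x - x₀‖ ≤ b}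

theorem closedAnnulus_eq_closedBall_sdiff_ball {E : Type*} [SeminormedAddCommGroup E]
    (x₀ : E) (a b : ℝ) : closedAnnulus x₀ a b = closedBall x₀ b \ ball x₀ a := by
  ext x
  simp [closedAnnulus, dist_eq_norm, and_comm]

theorem measurableSet_closedAnnulus {E : Type*} [SeminormedAddCommGroup E] [MeasurableSpace E]
    [OpensMeasurableSpace E] (x₀ : E) (a b : ℝ) : MeasurableSet (closedAnnulus x₀ a b) := by
  rw [closedAnnulus_eq_closedBall_sdiff_ball]
  exact measurableSet_closedBall.diff measurableSet_ball

section Annulus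

variable {E : Type*} [NormedAddCommGroup E] [InnerProductSpace ℝ E]

theorem add_mem_closedAnnulus {x₀ x v : E} {δ a b : ℝ} (hb : 0 ≤ b) (hv : ‖v‖ ≤ δ)
    (hlower : a ^ 2 - ‖x - x₀‖ ^ 2 ≤ 2 * ⟪x - x₀, v⟫)
    (hupper : 2 * ⟪x - x₀, v⟫ ≤ b ^ 2 - δ ^ 2 - ‖x - x₀‖ ^ 2) :
    x + v ∈ closedAnnulus x₀ a b := by
  have hnorm : ‖x + v - x₀‖ ^ 2 = ‖x - x₀‖ ^ 2 + 2 * ⟪x - x₀, v⟫ + ‖v‖ ^ 2 := by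
    rw [add_sub_right_comm, norm_add_sq_real]
  have hvδ : ‖v‖ ^ 2 ≤ δ ^ 2 := by gcongr
  exact ⟨le_of_sq_le_sq (by linarith [sq_nonneg ‖v‖]) (norm_nonneg _),
    le_of_sq_le_sq (by linarith) hb⟩

variable [MeasurableSpace E] [BorelSpace E]

theorem measure_ball_le_two_mul_measure_ball_inter_closedAnnulus
    (μ : Measure E) [μ.IsNegInvariant] [μ.IsAddLeftInvariant] {x₀ x : E} {δ a b : ℝ}
    (hδ : 0 ≤ δ) (ha : 0 ≤ a) (hb : 0 ≤ b) (hab : a ^ 2 + 2 * a * δ + 3 * δ ^ 2 ≤ b ^ 2)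
    (hx : x ∈ closedAnnulus x₀ a (a + δ)) :
    μ (ball 0 δ) ≤ 2 * μ (ball x δ ∩ closedAnnulus x₀ a b) := by
  set w := x - x₀
  obtain ⟨haw : a ≤ ‖w‖, hwa : ‖w‖ ≤ a + δ⟩ := hx
  have hsq_ge : a ^ 2 ≤ ‖w‖ ^ 2 := by gcongr
  have hsq_le : ‖w‖ ^ 2 ≤ (a + δ) ^ 2 := by gcongr
  have hδw : δ * ‖w‖ ≤ δ * (a + δ) := by gcongr
  set p := (‖w‖ ^ 2 - a ^ 2) / 2 with hp
  set q := (b ^ 2 - δ ^ 2 - ‖w‖ ^ 2) / 2 with hq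
  set S := ball 0 δ ∩ {v | -p ≤ ⟪w, v⟫ ∧ ⟪w, v⟫ ≤ q}
  have hslab : S ⊆ (x + ·) ⁻¹' (ball x δ ∩ closedAnnulus x₀ a b) := by
    rintro v ⟨hv, hpv, hvq⟩
    have hvδ : ‖v‖ < δ := by simpa using hv
    exact ⟨by simpa using hvδ, add_mem_closedAnnulus hb hvδ.le (by linarith) (by linarith)⟩
  calc μ (ball 0 δ) ≤ 2 * μ (ball 0 δ ∩ {v | 0 ≤ ⟪w, v⟫}) :=
        measure_ball_le_two_mul_measure_inter_inner_nonneg μ w δ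
    _ ≤ 2 * μ S := by
        gcongr 2 * ?_
        exact measure_ball_inter_inner_nonneg_le_measure_inter_slab μ (by linarith)
          (by linarith [sq_nonneg δ]) (by linarith)
    _ ≤ 2 * μ ((x + ·) ⁻¹' (ball x δ ∩ closedAnnulus x₀ a b)) := by gcongr
    _ = 2 * μ (ball x δ ∩ closedAnnulus x₀ a b) := by rw [measure_preimage_add]

theorem card_mul_measure_ball_le_two_mul_measure_closedAnnulus
    (μ : Measure E) [μ.IsNegInvariant] [μ.IsAddLeftInvariant] {x₀ : E} {δ a b : ℝ}
    (hδ : 0 ≤ δ) (ha : 0 ≤ a) (hb : 0 ≤ b) (hab : a ^ 2 + 2 * a * δ + 3 * δ ^ 2 ≤ b ^ 2)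
    {s : Finset E} (hdisj : (s : Set E).PairwiseDisjoint (ball · δ))
    (hs : (s : Set E) ⊆ closedAnnulus x₀ a (a + δ)) :
    s.card * μ (ball 0 δ) ≤ 2 * μ (closedAnnulus x₀ a b) := by
  set A := closedAnnulus x₀ a b
  have hA : MeasurableSet A := measurableSet_closedAnnulus x₀ a b
  calc s.card * μ (ball 0 δ) = ∑ _ ∈ s, μ (ball 0 δ) := by simp
    _ ≤ ∑ x ∈ s, 2 * μ (ball x δ ∩ A) := Finset.sum_le_sum fun x hx =>
        measure_ball_le_two_mul_measure_ball_inter_closedAnnulus μ hδ ha hb hab (hs hx)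
    _ = 2 * μ (⋃ x ∈ s, ball x δ ∩ A) := by
        rw [← Finset.mul_sum, measure_biUnion_finset
          (hdisj.mono fun _ => Set.inter_subset_left) fun _ _ => measurableSet_ball.inter hA]
    _ ≤ 2 * μ A := by
        gcongr
        exact Set.iUnion₂_subset fun _ _ => Set.inter_subset_right

end Annulus

section Volume

variable {E : Type*} [NormedAddCommGroup E]

theorem measureReal_closedAnnulus [NormedSpace ℝ E] [FiniteDimensional ℝ E]
    [MeasurableSpace E] [BorelSpace E] (μ : Measure E)
    [μ.IsAddHaarMeasure] (x₀ : E) {a b : ℝ} (ha : 0 < a) (hab : a ≤ b) :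
    μ.real (closedAnnulus x₀ a b) =
      (b ^ finrank ℝ E - a ^ finrank ℝ E) * μ.real (ball (0 : E) 1) := by
  have hball : μ.real (ball x₀ a) = a ^ finrank ℝ E * μ.real (ball (0 : E) 1) := by
    simp [measureReal_def, Measure.addHaar_ball_of_pos μ x₀ ha, ha.le]
  rw [closedAnnulus_eq_closedBall_sdiff_ball,
    measureReal_sdiff (ball_subset_closedBall.trans (closedBall_subset_closedBall hab))
      measurableSet_ball measure_closedBall_lt_top.ne,
    Measure.addHaar_real_closedBall μ x₀ (ha.le.trans hab), hball, sub_mul]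

variable [InnerProductSpace ℝ E] [FiniteDimensional ℝ E]

theorem card_mul_pow_le_two_mul_pow_sub_pow {x₀ : E} {δ a b : ℝ}
    (hδ : 0 < δ) (ha : 0 < a) (hb : 0 ≤ b) (hab : a ^ 2 + 2 * a * δ + 3 * δ ^ 2 ≤ b ^ 2)
    {s : Finset E} (hdisj : (s : Set E).PairwiseDisjoint (ball · δ))
    (hs : (s : Set E) ⊆ closedAnnulus x₀ a (a + δ)) :
    s.card * δ ^ finrank ℝ E ≤ 2 * (b ^ finrank ℝ E - a ^ finrank ℝ E) := by
  let _ : MeasurableSpace E := borel E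
  have : BorelSpace E := ⟨rfl⟩
  have hle : a ≤ b := le_of_sq_le_sq (hab.trans' (by nlinarith)) hb
  have hfinite : volume (closedAnnulus x₀ a b) ≠ ⊤ := by
    rw [closedAnnulus_eq_closedBall_sdiff_ball]
    exact measure_ne_top_of_subset Set.sdiff_subset measure_closedBall_lt_top.ne
  have hunit : 0 < volume.real (ball (0 : E) 1) :=
    ENNReal.toReal_pos (measure_ball_pos _ _ one_pos).ne' measure_ball_lt_top.ne
  have hcount : s.card * volume.real (ball (0 : E) δ) ≤
      2 * volume.real (closedAnnulus x₀ a b) := by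
    simpa [measureReal_def] using ENNReal.toReal_mono (ENNReal.mul_ne_top (by simp) hfinite)
      (card_mul_measure_ball_le_two_mul_measure_closedAnnulus volume hδ.le ha.le hb hab hdisj hs)
  have hball : volume.real (ball (0 : E) δ) = δ ^ finrank ℝ E * volume.real (ball (0 : E) 1) := by
    simp [measureReal_def, Measure.addHaar_ball_of_pos volume (0 : E) hδ, hδ.le]
  rw [hball, measureReal_closedAnnulus volume x₀ ha hle, ← mul_assoc, ← mul_assoc] at hcount
  exact le_of_mul_le_mul_right hcount hunit

theorem card_le_two_mul_sqrt_pow_sub_pow {x₀ : E} {δ j : ℝ} (hδ : 0 < δ) (hj : 0 < j)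
    {s : Finset E} (hdisj : (s : Set E).PairwiseDisjoint (ball · δ))
    (hs : (s : Set E) ⊆ closedAnnulus x₀ (j * δ) ((j + 1) * δ)) :
    (s.card : ℝ) ≤ 2 * (√(j ^ 2 + 2 * j + 3) ^ finrank ℝ E - j ^ finrank ℝ E) := by
  have hradius : (j * δ) ^ 2 + 2 * (j * δ) * δ + 3 * δ ^ 2 = (√(j ^ 2 + 2 * j + 3) * δ) ^ 2 := by
    rw [mul_pow √_, Real.sq_sqrt (by positivity)]
    ring
  rw [add_one_mul] at hs
  have hvolume := card_mul_pow_le_two_mul_pow_sub_pow hδ (by positivity) (by positivity)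
    hradius.le hdisj hs
  rw [mul_pow, mul_pow, ← sub_mul, ← mul_assoc] at hvolume
  exact le_of_mul_le_mul_right hvolume (by positivity)

end Volume

theorem two_mul_pow_sub_pow_le {R : Type*} [CommRing R] [LinearOrder R] [IsStrictOrderedRing R]
    {x y : R} (hx : 0 ≤ x) (hxy : x ≤ y) (n : ℕ) :
    2 * (y ^ (n + 2) - x ^ (n + 2)) ≤ (n + 2) * (y ^ 2 - x ^ 2) * y ^ n := by
  have hy : 0 ≤ y := hx.trans hxy
  induction n with
  | zero => simp
  | succ n ih =>
    have hpow : 2 * x ^ (n + 2) ≤ (y + x) * y ^ (n + 1) := calc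
      2 * x ^ (n + 2) = (x + x) * x ^ (n + 1) := by ring
      _ ≤ (y + x) * y ^ (n + 1) := by gcongr
    calc 2 * (y ^ (n + 1 + 2) - x ^ (n + 1 + 2))
        = y * (2 * (y ^ (n + 2) - x ^ (n + 2))) + (y - x) * (2 * x ^ (n + 2)) := by ring
      _ ≤ y * ((n + 2) * (y ^ 2 - x ^ 2) * y ^ n) + (y - x) * ((y + x) * y ^ (n + 1)) :=
        add_le_add (mul_le_mul_of_nonneg_left ih hy)
          (mul_le_mul_of_nonneg_left hpow (sub_nonneg.2 hxy))
      _ = ((n + 1 : ℕ) + 2) * (y ^ 2 - x ^ 2) * y ^ (n + 1) := by push_cast; ring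

theorem sqrt_sq_add_le_mul_exp {j : ℝ} (hj : 1 / 4 < j) :
    √(j ^ 2 + 2 * j + 3) ≤ j * Real.exp (5 / (4 * j - 1)) := by
  have hj₀ : 0 < j := by linarith
  have hden : 0 < 4 * j - 1 := by linarith
  have harg : 5 / (2 * j) ≤ (2 : ℕ) * (5 / (4 * j - 1)) := by
    rw [← mul_div_assoc, div_le_div_iff₀ (by positivity) hden]
    push_cast
    linarith
  refine Real.sqrt_le_iff.2 ⟨by positivity, ?_⟩
  calc j ^ 2 + 2 * j + 3 ≤ j ^ 2 + 5 / 2 * j + 25 / 8 := by linarith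
    _ = j ^ 2 * (1 + 5 / (2 * j) + (5 / (2 * j)) ^ 2 / 2) := by field_simp; ring
    _ ≤ j ^ 2 * Real.exp (5 / (2 * j)) := by
        gcongr
        exact Real.quadratic_le_exp_of_nonneg (by positivity)
    _ ≤ j ^ 2 * Real.exp ((2 : ℕ) * (5 / (4 * j - 1))) := by gcongr
    _ = (j * Real.exp (5 / (4 * j - 1))) ^ 2 := by rw [Real.exp_nat_mul, mul_pow]

theorem two_mul_add_three_le_mul_exp {j : ℝ} (hj : 1 / 4 < j) :
    2 * j + 3 ≤ 2 * j * Real.exp (7 / (4 * j - 1)) := by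
  have hj₀ : 0 < j := by linarith
  have hden : 0 < 4 * j - 1 := by linarith
  have harg : 3 / (2 * j) ≤ 7 / (4 * j - 1) := by
    rw [div_le_div_iff₀ (by positivity) hden]
    linarith
  calc 2 * j + 3 = 2 * j * (3 / (2 * j) + 1) := by field_simp; ring
    _ ≤ 2 * j * (7 / (4 * j - 1) + 1) := by gcongr
    _ ≤ 2 * j * Real.exp (7 / (4 * j - 1)) := by
        gcongr
        exact Real.add_one_le_exp _

theorem two_mul_sqrt_pow_sub_pow_le_mul_exp {j : ℝ} (hj : 1 / 4 < j) (n : ℕ) :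
    2 * (√(j ^ 2 + 2 * j + 3) ^ (n + 2) - j ^ (n + 2)) ≤
      2 * (n + 2) * j ^ (n + 1) * Real.exp ((5 * n + 7) / (4 * j - 1)) := by
  have hj₀ : 0 < j := by linarith
  calc 2 * (√(j ^ 2 + 2 * j + 3) ^ (n + 2) - j ^ (n + 2))
      ≤ (n + 2) * (√(j ^ 2 + 2 * j + 3) ^ 2 - j ^ 2) * √(j ^ 2 + 2 * j + 3) ^ n :=
        two_mul_pow_sub_pow_le hj₀.le (Real.le_sqrt_of_sq_le (by linarith)) n
    _ = (n + 2) * (2 * j + 3) * √(j ^ 2 + 2 * j + 3) ^ n := by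
        rw [Real.sq_sqrt (by positivity)]
        ring
    _ ≤ (n + 2) * (2 * j * Real.exp (7 / (4 * j - 1))) *
          (j * Real.exp (5 / (4 * j - 1))) ^ n := by
        gcongr
        · exact two_mul_add_three_le_mul_exp hj
        · exact sqrt_sq_add_le_mul_exp hj
    _ = 2 * (n + 2) * j ^ (n + 1) * Real.exp ((5 * n + 7) / (4 * j - 1)) := by
        rw [mul_pow, ← Real.exp_nat_mul, add_div, add_comm (_ / _), Real.exp_add, mul_comm 5,
          mul_div_assoc]
        ring

-- For large `j` the inequality `√(j ^ 2 + 2 * j + 3) - j ≤ exp (2 / (4 * j - 1))` fails, so the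
-- one-dimensional bound has to use that `N` is an integer.
theorem natCast_le_two_mul_exp_of_le_two_mul_sqrt_sub {j : ℝ} (hj : 1 / 4 < j) {N : ℕ}
    (hN : N ≤ 2 * (√(j ^ 2 + 2 * j + 3) - j)) : N ≤ 2 * Real.exp (2 / (4 * j - 1)) := by
  have hden : 0 < 4 * j - 1 := by linarith
  rcases le_or_gt j (3 / 4) with hj_small | hj_large
  · have hsqrt : √(j ^ 2 + 2 * j + 3) ≤ j + 2 := Real.sqrt_le_iff.2 ⟨by linarith, by nlinarith⟩
    have hfrac : 1 ≤ 2 / (4 * j - 1) := by rw [one_le_div₀ hden]; linarith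
    linarith [Real.add_one_le_exp (2 / (4 * j - 1))]
  · have hsqrt : √(j ^ 2 + 2 * j + 3) < j + 3 / 2 :=
      (Real.sqrt_lt' (by linarith)).2 (by nlinarith)
    have hlt : N < 3 := by exact_mod_cast (show (N : ℝ) < 3 by linarith)
    have hle : (N : ℝ) ≤ 2 := by exact_mod_cast Nat.le_of_lt_succ hlt
    linarith [Real.one_le_exp (div_nonneg zero_le_two hden.le)]

theorem natCast_le_mul_exp_of_le_two_mul_sqrt_pow_sub_pow {j : ℝ} (hj : 1 / 4 < j) {N d : ℕ}
    (hN : N ≤ 2 * (√(j ^ 2 + 2 * j + 3) ^ d - j ^ d)) :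
    N ≤ 2 * d * j ^ (d - 1) * Real.exp ((5 * d - 3) / (4 * j - 1)) := by
  match d with
  | 0 => simpa using hN
  | 1 =>
    rw [pow_one, pow_one] at hN
    have hexponent : 5 * ((1 : ℕ) : ℝ) - 3 = 2 := by norm_num
    rw [hexponent, Nat.cast_one, mul_one, Nat.sub_self, pow_zero, mul_one]
    exact natCast_le_two_mul_exp_of_le_two_mul_sqrt_sub hj hN
  | n + 2 =>
    have hexponent : 5 * ((n + 2 : ℕ) : ℝ) - 3 = 5 * n + 7 := by push_cast; ring
    rw [hexponent, Nat.cast_add, Nat.cast_ofNat]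
    exact hN.trans (two_mul_sqrt_pow_sub_pow_le_mul_exp hj n)

theorem finite_and_ncard_le_of_forall_finset_card_le {α : Type*} {s : Set α} {C : ℝ}
    (h : ∀ t : Finset α, (t : Set α) ⊆ s → t.card ≤ C) : s.Finite ∧ s.ncard ≤ C := by
  have hfinite : s.Finite := by
    by_contra hinf
    obtain ⟨n, hn⟩ := exists_nat_gt C
    obtain ⟨t, hts, rfl⟩ := Set.Infinite.exists_subset_card_eq hinf n
    exact hn.not_ge (h t hts)
  refine ⟨hfinite, ?_⟩
  rw [Set.ncard_eq_toFinset_card s hfinite]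
  exact h _ hfinite.coe_toFinset.subset

theorem narcowich_ward_improved_general {E : Type*} [NormedAddCommGroup E] [InnerProductSpace ℝ E]
    [FiniteDimensional ℝ E] {δ j : ℝ} (hδ : 0 < δ) (hj : 1 / 4 < j) {𝒳 : Set E}
    (hsep : 𝒳.Pairwise fun x y => 2 * δ ≤ ‖x - y‖) (x₀ : E) :
    (𝒳 ∩ closedAnnulus x₀ (j * δ) ((j + 1) * δ)).Finite ∧
      (𝒳 ∩ closedAnnulus x₀ (j * δ) ((j + 1) * δ)).ncard ≤
        2 * finrank ℝ E * j ^ (finrank ℝ E - 1) *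
          Real.exp ((5 * finrank ℝ E - 3) / (4 * j - 1)) := by
  refine finite_and_ncard_le_of_forall_finset_card_le fun s hs => ?_
  have hdisj : (s : Set E).PairwiseDisjoint (ball · δ) := fun x hx y hy hxy =>
    ball_disjoint_ball <| by
      rw [← two_mul, dist_eq_norm]
      exact hsep (hs hx).1 (hs hy).1 hxy
  exact natCast_le_mul_exp_of_le_two_mul_sqrt_pow_sub_pow hj <|
    card_le_two_mul_sqrt_pow_sub_pow hδ (by linarith) hdisj (hs.trans Set.inter_subset_right)

theorem narcowich_ward_improved (d : ℕ) (hd : 1 ≤ d) (δ : ℝ) (hδ : 0 < δ)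
    (𝒳 : Set (EuclideanSpace ℝ (Fin d)))
    (hsep : ∀ x ∈ 𝒳, ∀ y ∈ 𝒳, x ≠ y → 2 * δ ≤ ‖x - y‖)
    (x₀ : EuclideanSpace ℝ (Fin d)) (j : ℕ) (hj : 1 ≤ j) :
    ((𝒳 ∩ {x : EuclideanSpace ℝ (Fin d) |
        (j : ℝ) * δ ≤ ‖x - x₀‖ ∧ ‖x - x₀‖ ≤ ((j : ℝ) + 1) * δ}).ncard : ℝ) ≤
      2 * (d : ℝ) * (j : ℝ) ^ (d - 1) *
        Real.exp ((5 * (d : ℝ) - 3) / (4 * (j : ℝ) - 1)) := by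
  have hj' : (1 / 4 : ℝ) < j := by linarith [Nat.one_le_cast (α := ℝ).2 hj]
  simpa only [closedAnnulus, finrank_euclideanSpace_fin] using
    (narcowich_ward_improved_general hδ hj' hsep x₀).2
end

section
/- Let d ≥ 1 and 0 < r ≤ R. Then for every point q ∈ ℝ^d with |q| ≤ R, the Lebesgue measure of the intersection of the closed ball of radius R centered at the origin with the closed ball of radius r centered at q satisfies vol(B̄(0,R) ∩ B̄(q,r)) ≥ (π^{(d−1)/2} r^d / Γ((d+1)/2)) · ∫_0^A sin^d t dt, where A := arccos(r/(2R)). -/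
open Metric MeasureTheory

/-! Let `s = ‖q‖`, let `u` be the unit vector pointing from `q` to the centre of the large ball, and
let `h = r ^ 2 / (2 * R)`. For `s = R`, the hyperplane through the intersection of the two spheres
has distance `h` from `q`, and it cuts off from the small ball a cap contained in both balls. A
translate of this cap fits into the intersection for every `s ≤ R`: since `h ≤ ⟪u, y⟫` on the cap,
it lies in the ball of radius `ρ` about `c • u`, `0 ≤ c`, as soon as
`r ^ 2 - 2 * c * h + c ^ 2 ≤ ρ ^ 2`, and for `τ = min (R - s) (2 * h)` this applies to the balls of
radius `r` about `τ • u` and of radius `R` about `(s + τ) • u`. The volume of the cap is found by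
slicing orthogonally to `u`. -/

open Module
open scoped Pointwise RealInnerProductSpace

/-- The volume of the unit ball of an `n`-dimensional Euclidean space, by its closed formula so that
`n = 0` needs no exception. -/
noncomputable def unitBallVolume (n : ℕ) : ℝ :=
  Real.pi ^ ((n : ℝ) / 2) / Real.Gamma ((n : ℝ) / 2 + 1)

lemma unitBallVolume_nonneg (n : ℕ) : 0 ≤ unitBallVolume n :=
  div_nonneg (by positivity) (Real.Gamma_nonneg_of_nonneg (by positivity))

lemma integral_sqrt_sq_sub_sq_pow (n : ℕ) {r A : ℝ} (hr : 0 ≤ r) (hA : 0 ≤ A)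
    (hAπ : A ≤ Real.pi) :
    ∫ t in (r * Real.cos A)..r, √(r ^ 2 - t ^ 2) ^ n =
      r ^ (n + 1) * ∫ θ in 0..A, Real.sin θ ^ (n + 1) := by
  have hsubst := intervalIntegral.integral_comp_mul_deriv (a := A) (b := 0)
    (f := fun θ ↦ r * Real.cos θ) (f' := fun θ ↦ r * -Real.sin θ)
    (g := fun t ↦ √(r ^ 2 - t ^ 2) ^ n)
    (fun θ _ ↦ (Real.hasDerivAt_cos θ).const_mul r) (by fun_prop) (by fun_prop)
  simp only [Real.cos_zero, mul_one] at hsubst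
  rw [← hsubst, intervalIntegral.integral_symm, ← intervalIntegral.integral_neg,
    ← intervalIntegral.integral_const_mul]
  refine intervalIntegral.integral_congr fun θ hθ ↦ ?_
  rw [Set.uIcc_of_le hA] at hθ
  have hsin : 0 ≤ Real.sin θ := Real.sin_nonneg_of_nonneg_of_le_pi hθ.1 (hθ.2.trans hAπ)
  have hsqrt : √(r ^ 2 - (r * Real.cos θ) ^ 2) = r * Real.sin θ := by
    rw [← Real.sqrt_sq (mul_nonneg hr hsin), mul_pow r (Real.sin θ), Real.sin_sq]
    ring_nf
  simp only [Function.comp_apply, hsqrt]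
  ring

section SphericalCap

variable {E : Type*} [NormedAddCommGroup E] [InnerProductSpace ℝ E] {u : E} {r h : ℝ}

/-- The cap which the half-space `{x | h ≤ ⟪u, x⟫}` cuts off from the closed ball of radius `r`
centred at the origin; for a unit vector `u`, its base is at signed distance `h` from the centre. -/
def sphericalCap (u : E) (r h : ℝ) : Set E := closedBall 0 r ∩ {x | h ≤ ⟪u, x⟫}

lemma isClosed_sphericalCap (u : E) (r h : ℝ) : IsClosed (sphericalCap u r h) :=
  isClosed_closedBall.inter (isClosed_le continuous_const (innerSL ℝ u).continuous)

lemma sphericalCap_subset_closedBall_smul {c ρ : ℝ} (hu : ‖u‖ = 1) (hc : 0 ≤ c) (hρ : 0 ≤ ρ)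
    (hcρ : r ^ 2 - 2 * c * h + c ^ 2 ≤ ρ ^ 2) : sphericalCap u r h ⊆ closedBall (c • u) ρ := by
  rintro x ⟨hxr, hxh⟩
  rw [mem_closedBall_zero_iff] at hxr
  rw [Set.mem_ofPred_eq] at hxh
  rw [mem_closedBall_iff_norm, ← sq_le_sq₀ (norm_nonneg _) hρ]
  calc ‖x - c • u‖ ^ 2 = ‖x‖ ^ 2 - 2 * c * ⟪u, x⟫ + c ^ 2 := by
        rw [norm_sub_sq_real, norm_smul, hu, mul_one, Real.norm_eq_abs, sq_abs,
          real_inner_smul_right, real_inner_comm]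
        ring
    _ ≤ r ^ 2 - 2 * c * h + c ^ 2 := by gcongr
    _ ≤ ρ ^ 2 := hcρ

lemma smul_add_mem_sphericalCap_iff (hu : ‖u‖ = 1) (hr : 0 ≤ r) {t : ℝ} (y : (ℝ ∙ u)ᗮ) :
    t • u + y ∈ sphericalCap u r h ↔ t ^ 2 + ‖y‖ ^ 2 ≤ r ^ 2 ∧ h ≤ t := by
  have huy : ⟪u, (y : E)⟫ = 0 := Submodule.mem_orthogonal_singleton_iff_inner_right.1 y.2
  have hinner : ⟪u, t • u + y⟫ = t := by
    rw [inner_add_right, real_inner_smul_right, real_inner_self_eq_norm_sq, hu, huy]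
    ring
  have hnorm : ‖t • u + y‖ ^ 2 = t ^ 2 + ‖y‖ ^ 2 := by
    rw [norm_add_sq_real, real_inner_smul_left, huy, norm_smul, hu]
    simp
  rw [sphericalCap, Set.mem_inter_iff, mem_closedBall_zero_iff, Set.mem_ofPred_eq, hinner,
    ← sq_le_sq₀ (norm_nonneg _) hr, hnorm]

lemma exists_sphericalCap_subset_inter_closedBall_smul {s R : ℝ} (hu : ‖u‖ = 1) (hr : 0 ≤ r)
    (hR : 0 < R) (hs : 0 ≤ s) (hsR : s ≤ R) :
    ∃ τ : ℝ, sphericalCap u r (r ^ 2 / (2 * R)) ⊆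
      closedBall ((s + τ) • u) R ∩ closedBall (τ • u) r := by
  set h := r ^ 2 / (2 * R)
  have hhR : 2 * h * R = r ^ 2 := by
    simp only [h]
    field_simp
  have hh : 0 ≤ h := by positivity
  set τ := min (R - s) (2 * h)
  have hτ : 0 ≤ τ := le_min (by linarith) (by linarith)
  have hτh : τ ≤ 2 * h := min_le_right _ _
  have hfactor : (s + τ - R) * (s + τ - (2 * h - R)) ≤ 0 := by
    rcases min_cases (R - s) (2 * h) with ⟨hmin, -⟩ | ⟨-, hle⟩
    · simp [τ, hmin]
    · exact mul_nonpos_of_nonpos_of_nonneg (by linarith) (by linarith)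
  exact ⟨τ, Set.subset_inter
    (sphericalCap_subset_closedBall_smul hu (by positivity) hR.le (by linarith))
    (sphericalCap_subset_closedBall_smul hu hτ hr (by nlinarith))⟩

lemma exists_norm_eq_one_and_eq_norm_smul [Nontrivial E] (x : E) :
    ∃ u : E, ‖u‖ = 1 ∧ x = ‖x‖ • u := by
  rcases eq_or_ne x 0 with rfl | hx
  · obtain ⟨u, hu⟩ := exists_norm_eq E zero_le_one
    exact ⟨u, hu, by simp⟩
  · exact ⟨‖x‖⁻¹ • x, norm_smul_inv_norm hx, (smul_inv_smul₀ (norm_ne_zero_iff.2 hx) x).symm⟩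

lemma exists_vadd_sphericalCap_subset_inter_closedBall [Nontrivial E] {R : ℝ} (hr : 0 ≤ r)
    (hR : 0 < R) {p q : E} (hpq : dist p q ≤ R) :
    ∃ u v : E, ‖u‖ = 1 ∧
      v +ᵥ sphericalCap u r (r ^ 2 / (2 * R)) ⊆ closedBall p R ∩ closedBall q r := by
  obtain ⟨u, hu, hpqu⟩ := exists_norm_eq_one_and_eq_norm_smul (p - q)
  rw [dist_eq_norm] at hpq
  obtain ⟨τ, hcap⟩ :=
    exists_sphericalCap_subset_inter_closedBall_smul hu hr hR (norm_nonneg (p - q)) hpq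
  have hp : (q - τ • u) +ᵥ (‖p - q‖ + τ) • u = p := by
    rw [add_smul, ← hpqu, vadd_eq_add]
    abel
  have hq : (q - τ • u) +ᵥ τ • u = q := by rw [vadd_eq_add, sub_add_cancel]
  refine ⟨u, q - τ • u, hu, (Set.vadd_set_mono hcap).trans ?_⟩
  rw [Set.vadd_set_inter, vadd_closedBall, vadd_closedBall, hp, hq]

end SphericalCap

section Volume

variable {E : Type*} [NormedAddCommGroup E] [InnerProductSpace ℝ E] [FiniteDimensional ℝ E]
  [MeasurableSpace E] [BorelSpace E]

lemma volume_closedBall_eq_unitBallVolume_mul (x : E) {r : ℝ} (hr : 0 ≤ r) :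
    volume (closedBall x r) = ENNReal.ofReal (unitBallVolume (finrank ℝ E) * r ^ finrank ℝ E) := by
  rcases subsingleton_or_nontrivial E with hE | hE
  · have hball : closedBall x r = parallelepiped (stdOrthonormalBasis ℝ E) :=
      (Subsingleton.eq_univ_of_nonempty ⟨x, mem_closedBall_self hr⟩).trans
        (Subsingleton.eq_univ_of_nonempty
          ⟨0, (mem_parallelepiped_iff _ _).2 ⟨0, by simp, by simp⟩⟩).symm
    rw [hball, OrthonormalBasis.volume_parallelepiped, finrank_zero_of_subsingleton]
    simp [unitBallVolume]
  · rw [InnerProductSpace.volume_closedBall, mul_comm, ENNReal.ofReal_mul (unitBallVolume_nonneg _),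
      ENNReal.ofReal_pow hr, unitBallVolume, Real.sqrt_eq_rpow,
      ← Real.rpow_mul_natCast Real.pi_nonneg, one_div_mul_eq_div]

lemma measurePreserving_add_orthogonal (K : Submodule ℝ E) :
    MeasurePreserving (fun p : K × Kᗮ ↦ (p.1 + p.2 : E)) :=
  K.orthogonalDecomposition.symm.measurePreserving.comp (WithLp.volume_preserving_toLp K Kᗮ)

lemma measurePreserving_smul_add_orthogonal {u : E} (hu : ‖u‖ = 1) :
    MeasurePreserving (fun p : ℝ × (ℝ ∙ u)ᗮ ↦ p.1 • u + (p.2 : E)) :=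
  (measurePreserving_add_orthogonal (ℝ ∙ u)).comp
    ((LinearIsometryEquiv.toSpanUnitSingleton u hu).measurePreserving.prod (.id _))

lemma volume_eq_lintegral_volume_slice {u : E} (hu : ‖u‖ = 1) {S : Set E} (hS : MeasurableSet S) :
    volume S = ∫⁻ t : ℝ, volume {y : (ℝ ∙ u)ᗮ | t • u + y ∈ S} := by
  have hmp := measurePreserving_smul_add_orthogonal hu
  rw [← hmp.measure_preimage hS.nullMeasurableSet, Measure.volume_eq_prod,
    Measure.prod_apply (hmp.measurable hS)]
  rfl

variable {n : ℕ} {u : E} {r h : ℝ}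

lemma volume_slice_sphericalCap (hE : finrank ℝ E = n + 1) (hu : ‖u‖ = 1) (hr : 0 ≤ r)
    (hrh : -r ≤ h) (t : ℝ) :
    volume {y : (ℝ ∙ u)ᗮ | t • u + y ∈ sphericalCap u r h} =
      (Set.Icc h r).indicator
        (fun t ↦ ENNReal.ofReal (unitBallVolume n * √(r ^ 2 - t ^ 2) ^ n)) t := by
  simp only [smul_add_mem_sphericalCap_iff hu hr]
  by_cases ht : t ∈ Set.Icc h r
  · have : Fact (finrank ℝ E = n + 1) := ⟨hE⟩
    have hfinrank : finrank ℝ (ℝ ∙ u)ᗮ = n :=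
      Submodule.finrank_orthogonal_span_singleton (norm_ne_zero_iff.1 (hu ▸ one_ne_zero))
    have htr : 0 ≤ r ^ 2 - t ^ 2 := by nlinarith [ht.1, ht.2]
    have hball := volume_closedBall_eq_unitBallVolume_mul (0 : (ℝ ∙ u)ᗮ)
      (Real.sqrt_nonneg (r ^ 2 - t ^ 2))
    rw [hfinrank] at hball
    rw [Set.indicator_of_mem ht, ← hball]
    congr 1 with y
    simp only [Set.mem_ofPred_eq, mem_closedBall_zero_iff, Real.le_sqrt (norm_nonneg _) htr,
      le_sub_iff_add_le', ht.1, and_true]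
  · have hempty : {y : (ℝ ∙ u)ᗮ | t ^ 2 + ‖y‖ ^ 2 ≤ r ^ 2 ∧ h ≤ t} = ∅ :=
      Set.eq_empty_of_forall_notMem fun y ⟨hty, hht⟩ ↦
        ht ⟨hht, le_of_sq_le_sq (by linarith [sq_nonneg ‖y‖]) hr⟩
    rw [Set.indicator_of_notMem ht, hempty, measure_empty]

lemma volume_sphericalCap (hE : finrank ℝ E = n + 1) (hu : ‖u‖ = 1) (hrh : -r ≤ h) (hhr : h ≤ r) :
    volume (sphericalCap u r h) =
      ENNReal.ofReal (unitBallVolume n * ∫ t in h..r, √(r ^ 2 - t ^ 2) ^ n) := by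
  rw [volume_eq_lintegral_volume_slice hu (isClosed_sphericalCap u r h).measurableSet]
  simp only [volume_slice_sphericalCap hE hu (by linarith : 0 ≤ r) hrh]
  rw [lintegral_indicator measurableSet_Icc, ← intervalIntegral.integral_const_mul,
    intervalIntegral.integral_of_le hhr, ← integral_Icc_eq_integral_Ioc,
    ofReal_integral_eq_lintegral_ofReal]
  · exact Continuous.integrableOn_Icc (by fun_prop)
  · exact .of_forall fun t ↦ mul_nonneg (unitBallVolume_nonneg n) (by positivity)

lemma volume_sphericalCap_mul_cos (hE : finrank ℝ E = n + 1) (hu : ‖u‖ = 1) (hr : 0 ≤ r) {A : ℝ}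
    (hA : 0 ≤ A) (hAπ : A ≤ Real.pi) :
    volume (sphericalCap u r (r * Real.cos A)) =
      ENNReal.ofReal
        (unitBallVolume n * (r ^ (n + 1) * ∫ θ in 0..A, Real.sin θ ^ (n + 1))) := by
  rw [volume_sphericalCap hE hu (by nlinarith [Real.neg_one_le_cos A])
    (mul_le_of_le_one_right hr (Real.cos_le_one A)), integral_sqrt_sq_sub_sq_pow n hr hA hAπ]

end Volume

theorem ball_intersection_volume_lower_bound_general {E : Type*} [NormedAddCommGroup E]
    [InnerProductSpace ℝ E] [FiniteDimensional ℝ E] [MeasurableSpace E] [BorelSpace E]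
    {d : ℕ} (hd : 1 ≤ d) (hE : finrank ℝ E = d) {r R : ℝ} (hr : 0 < r) (hrR : r ≤ 2 * R) {p q : E}
    (hpq : dist p q ≤ R) :
    Real.pi ^ (((d : ℝ) - 1) / 2) * r ^ d / Real.Gamma (((d : ℝ) + 1) / 2) *
        ∫ t in 0..Real.arccos (r / (2 * R)), Real.sin t ^ d ≤
      volume.real (closedBall p R ∩ closedBall q r) := by
  obtain ⟨n, rfl⟩ := Nat.exists_eq_add_of_le' hd
  have : Nontrivial E := nontrivial_of_finrank_eq_succ hE
  have hR : 0 < R := by linarith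
  obtain ⟨u, v, hu, hsub⟩ := exists_vadd_sphericalCap_subset_inter_closedBall hr.le hR hpq
  set A := Real.arccos (r / (2 * R))
  have hbase : r ^ 2 / (2 * R) = r * Real.cos A := by
    rw [Real.cos_arccos (by linarith [show 0 ≤ r / (2 * R) by positivity])
      ((div_le_one (by positivity)).2 hrR)]
    ring
  have hconst : Real.pi ^ (((n + 1 : ℕ) - 1 : ℝ) / 2) * r ^ (n + 1) /
      Real.Gamma (((n + 1 : ℕ) + 1 : ℝ) / 2) = unitBallVolume n * r ^ (n + 1) := by
    rw [unitBallVolume, show (((n + 1 : ℕ) : ℝ) - 1) / 2 = n / 2 by push_cast; ring,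
      show (((n + 1 : ℕ) : ℝ) + 1) / 2 = n / 2 + 1 by push_cast; ring]
    ring
  have hfin : volume (closedBall p R ∩ closedBall q r) ≠ ⊤ :=
    measure_ne_top_of_subset Set.inter_subset_left measure_closedBall_lt_top.ne
  rw [hconst, mul_assoc, Measure.real, ← ENNReal.ofReal_le_iff_le_toReal hfin,
    ← volume_sphericalCap_mul_cos hE hu hr.le (Real.arccos_nonneg _) (Real.arccos_le_pi _),
    ← hbase, ← measure_vadd volume v]
  exact measure_mono hsub

theorem ball_intersection_volume_lower_bound (d : ℕ) (hd : 1 ≤ d) (r R : ℝ) (hr : 0 < r)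
    (hrR : r ≤ R) (q : EuclideanSpace ℝ (Fin d)) (hq : ‖q‖ ≤ R) :
    Real.pi ^ (((d : ℝ) - 1) / 2) * r ^ d / Real.Gamma (((d : ℝ) + 1) / 2) *
        ∫ t in (0 : ℝ)..(Real.arccos (r / (2 * R))), Real.sin t ^ d ≤
      (volume (closedBall (0 : EuclideanSpace ℝ (Fin d)) R ∩ closedBall q r)).toReal :=
  ball_intersection_volume_lower_bound_general hd finrank_euclideanSpace_fin hr (by linarith)
    (by rwa [dist_zero_left])
end

section
/- Let d ≥ 1, let 0 < δ ≤ R and 0 < ρ ≤ δ, and let 𝒜 := {x ∈ ℝ^d : R − δ ≤ |x| ≤ R} be the closed annulus with outer radius R and thickness δ. Then for every q ∈ 𝒜 and every p ∈ ℝ^d with |p| = R, vol(𝒜 ∩ B̄(q, ρ)) ≥ vol(B̄(0,R) ∩ B̄(p, ρ)); that is, the minimal measure of the intersection of 𝒜 with a closed ball of radius ρ centered at a point of 𝒜 is attained when the ball is centered at a point of the outer boundary sphere. -/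
open Metric MeasureTheory

/-!
Rotate `q` onto the ray through `p` and slice both sets by the lines parallel to that ray. On a line
at distance `√w` from it, the ball of radius `R` cuts out `[-K, K]` with `K = √(R² - w)`, and the
balls of radius `ρ` cut out intervals of half-length `k = √(ρ² - w)` centred at `‖p‖` and `‖q‖`. The
points beyond `H = √(r² - w)` (or `H = -K` when `r ≤ 0`) lie outside the hole of radius `r`. The
lens slice is contained in `[max (-K) (‖p‖ - k), K]`, whose length is at most each of the four
differences of endpoints that can be the length of `[H, K] ∩ [‖q‖ - k, ‖q‖ + k]`. Fubini's theorem
concludes.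
-/

open scoped RealInnerProductSpace

theorem volume_Icc_inter_Icc_le {a t k H K L : ℝ} (hk : 0 ≤ k) (hHt : H ≤ t) (hta : t ≤ a)
    (hKa : K ≤ a) (hH : H ≤ max L (a - k)) :
    volume (Set.Icc L K ∩ Set.Icc (a - k) (a + k)) ≤
      volume (Set.Icc H K ∩ Set.Icc (t - k) (t + k)) := by
  simp only [Set.Icc_inter_Icc, Real.volume_Icc]
  refine ENNReal.ofReal_le_ofReal ?_
  have hright : min K (a + k) ≤ K := min_le_left _ _
  have hleft : a - k ≤ max L (a - k) := le_max_right _ _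
  rcases max_choice H (t - k) with h | h <;>
    rcases min_choice K (t + k) with h' | h' <;> simp only [h, h'] <;> linarith

theorem sqrt_sub_sq_add_le_iff {s c w ρ : ℝ} (hρ : 0 ≤ ρ) (hw : w ≤ ρ ^ 2) :
    √((s - c) ^ 2 + w) ≤ ρ ↔ s ∈ Set.Icc (c - √(ρ ^ 2 - w)) (c + √(ρ ^ 2 - w)) := by
  rw [Real.sqrt_le_left hρ, ← le_sub_iff_add_le, Real.sq_le (sub_nonneg.2 hw),
    neg_le_sub_iff_le_add, sub_le_iff_le_add', Set.mem_Icc, sub_le_iff_le_add]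

theorem le_sq_of_sqrt_sq_add_le {s w R : ℝ} (h : √(s ^ 2 + w) ≤ R) : w ≤ R ^ 2 := by
  linarith [(Real.sqrt_le_iff.1 h).2, sq_nonneg s]

theorem exists_mem_Icc_max_forall_le_sqrt_sq_add {r w L : ℝ} (hL : L ≤ 0) (hw : 0 ≤ w) :
    ∃ H ∈ Set.Icc L (max L r), ∀ s, H ≤ s → r ≤ √(s ^ 2 + w) := by
  rcases le_total r 0 with hr | hr
  · exact ⟨L, ⟨le_rfl, le_max_left _ _⟩, fun s _ => hr.trans (Real.sqrt_nonneg _)⟩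
  · have hHr : √(r ^ 2 - w) ≤ r := Real.sqrt_le_iff.2 ⟨hr, sub_le_self _ hw⟩
    refine ⟨√(r ^ 2 - w), ⟨hL.trans (Real.sqrt_nonneg _), le_max_of_le_right hHr⟩, fun s hs => ?_⟩
    exact Real.le_sqrt_of_sq_le (sub_le_iff_le_add.1 (Real.sqrt_le_iff.1 hs).2)

theorem volume_lens_slice_le_volume_annulus_slice {r R ρ a t w : ℝ} (ht : 0 ≤ t) (hrt : r ≤ t)
    (hta : t ≤ a) (hRa : R ≤ a) (hrρ : r + ρ ≤ a) (hw : 0 ≤ w) :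
    volume {s : ℝ | √(s ^ 2 + w) ≤ R ∧ √((s - a) ^ 2 + w) ≤ ρ} ≤
      volume {s : ℝ | √(s ^ 2 + w) ∈ Set.Icc r R ∧ √((s - t) ^ 2 + w) ≤ ρ} := by
  rcases Set.eq_empty_or_nonempty {s : ℝ | √(s ^ 2 + w) ≤ R ∧ √((s - a) ^ 2 + w) ≤ ρ}
    with hempty | ⟨s₀, hs₀R, hs₀ρ⟩
  · rw [hempty, measure_empty]
    exact zero_le
  have hR : 0 ≤ R := (Real.sqrt_nonneg _).trans hs₀R
  have hρ : 0 ≤ ρ := (Real.sqrt_nonneg _).trans hs₀ρ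
  have hball (s : ℝ) : √(s ^ 2 + w) ≤ R ↔ s ∈ Set.Icc (-√(R ^ 2 - w)) √(R ^ 2 - w) := by
    simpa using sqrt_sub_sq_add_le_iff (s := s) (c := 0) hR (le_sq_of_sqrt_sq_add_le hs₀R)
  have hcap (s c : ℝ) := sqrt_sub_sq_add_le_iff (s := s) (c := c) hρ (le_sq_of_sqrt_sq_add_le hs₀ρ)
  have hKR : √(R ^ 2 - w) ≤ R := Real.sqrt_le_iff.2 ⟨hR, sub_le_self _ hw⟩
  have hkρ : √(ρ ^ 2 - w) ≤ ρ := Real.sqrt_le_iff.2 ⟨hρ, sub_le_self _ hw⟩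
  have hK : -√(R ^ 2 - w) ≤ 0 := neg_nonpos.2 (Real.sqrt_nonneg _)
  have hk : 0 ≤ √(ρ ^ 2 - w) := Real.sqrt_nonneg _
  set K := √(R ^ 2 - w)
  set k := √(ρ ^ 2 - w)
  obtain ⟨H, ⟨hKH, hHmax⟩, hH⟩ := exists_mem_Icc_max_forall_le_sqrt_sq_add (r := r) hK hw
  calc volume {s : ℝ | √(s ^ 2 + w) ≤ R ∧ √((s - a) ^ 2 + w) ≤ ρ}
      = volume (Set.Icc (-K) K ∩ Set.Icc (a - k) (a + k)) := by
        simp only [hball, hcap, Set.ofPred_and, Set.ofPred_mem_eq]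
    _ ≤ volume (Set.Icc H K ∩ Set.Icc (t - k) (t + k)) :=
        volume_Icc_inter_Icc_le hk (hHmax.trans (max_le (hK.trans ht) hrt)) hta (hKR.trans hRa)
          (hHmax.trans (max_le_max le_rfl (by linarith)))
    _ ≤ volume {s : ℝ | √(s ^ 2 + w) ∈ Set.Icc r R ∧ √((s - t) ^ 2 + w) ≤ ρ} :=
        measure_mono fun s ⟨hsHK, hst⟩ =>
          ⟨⟨hH s hsHK.1, (hball s).2 ⟨hKH.trans hsHK.1, hsHK.2⟩⟩, (hcap s t).2 hst⟩

section Lines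

variable {E : Type*} [NormedAddCommGroup E] [InnerProductSpace ℝ E] {u : E}

theorem norm_smul_add_of_inner_eq_zero (hu : ‖u‖ = 1) {y : E} (hy : ⟪u, y⟫ = 0) (s : ℝ) :
    ‖s • u + y‖ = √(s ^ 2 + ‖y‖ ^ 2) := by
  have hsy : ⟪s • u, y⟫ = 0 := by rw [real_inner_smul_left, hy, mul_zero]
  rw [norm_add_eq_sqrt_iff_real_inner_eq_zero.2 hsy, norm_smul, hu, mul_one, Real.norm_eq_abs,
    abs_mul_abs_self, ← sq, ← sq]

variable [FiniteDimensional ℝ E] [MeasurableSpace E] [BorelSpace E]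

theorem measurePreserving_smul_add_orthogonal_s8 (hu : ‖u‖ = 1) :
    MeasurePreserving fun z : ℝ × (ℝ ∙ u)ᗮ => z.1 • u + (z.2 : E) := by
  have hline := (LinearIsometryEquiv.toSpanUnitSingleton u hu).measurePreserving
  exact ((ℝ ∙ u).orthogonalDecomposition.symm.measurePreserving.comp
    (WithLp.volume_preserving_toLp (ℝ ∙ u) (ℝ ∙ u)ᗮ)).comp (hline.prod (.id volume))

theorem volume_le_volume_of_forall_line (hu : ‖u‖ = 1) {S T : Set E} (hS : MeasurableSet S)
    (hT : MeasurableSet T)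
    (h : ∀ y, ⟪u, y⟫ = 0 → volume {s : ℝ | s • u + y ∈ S} ≤ volume {s : ℝ | s • u + y ∈ T}) :
    volume S ≤ volume T := by
  have hφ := measurePreserving_smul_add_orthogonal_s8 hu
  rw [← hφ.measure_preimage hS.nullMeasurableSet, ← hφ.measure_preimage hT.nullMeasurableSet,
    Measure.volume_eq_prod, Measure.prod_apply_symm (hφ.measurable hS),
    Measure.prod_apply_symm (hφ.measurable hT)]
  exact lintegral_mono fun y => h y (Submodule.mem_orthogonal_singleton_iff_inner_right.1 y.2)

theorem volume_norm_preimage_inter_closedBall_congr {q q' : E} (h : ‖q‖ = ‖q'‖) (A : Set ℝ)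
    (ρ : ℝ) :
    volume (norm ⁻¹' A ∩ closedBall q ρ) = volume (norm ⁻¹' A ∩ closedBall q' ρ) := by
  let f := (ℝ ∙ (q - q'))ᗮ.reflection
  have hf : f ⁻¹' (norm ⁻¹' A ∩ closedBall q' ρ) = norm ⁻¹' A ∩ closedBall q ρ := by
    ext x
    simp only [Set.mem_preimage, Set.mem_inter_iff, mem_closedBall, f.norm_map]
    rw [← f.dist_map x q, Submodule.reflection_sub h]
  rw [← hf, f.measurePreserving.measure_preimage_emb f.toHomeomorph.measurableEmbedding]

theorem volume_lens_le_volume_annulus_inter_closedBall_smul (hu : ‖u‖ = 1) {r R ρ a t : ℝ}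
    (ht : 0 ≤ t) (hrt : r ≤ t) (hta : t ≤ a) (hRa : R ≤ a) (hrρ : r + ρ ≤ a) :
    volume (closedBall (0 : E) R ∩ closedBall (a • u) ρ) ≤
      volume (norm ⁻¹' Set.Icc r R ∩ closedBall (t • u) ρ) := by
  refine volume_le_volume_of_forall_line hu
    (measurableSet_closedBall.inter measurableSet_closedBall)
    ((measurable_norm measurableSet_Icc).inter measurableSet_closedBall) fun y hy => ?_
  have hdist (s c : ℝ) : dist (s • u + y) (c • u) = √((s - c) ^ 2 + ‖y‖ ^ 2) := by
    rw [dist_eq_norm, add_sub_right_comm, ← sub_smul, norm_smul_add_of_inner_eq_zero hu hy]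
  simpa only [Set.mem_inter_iff, Set.mem_preimage, mem_closedBall, dist_zero_right, hdist,
    norm_smul_add_of_inner_eq_zero hu hy] using
    volume_lens_slice_le_volume_annulus_slice ht hrt hta hRa hrρ (sq_nonneg ‖y‖)

theorem annulus_minimal_intersection_at_outer_boundary_general {r R ρ : ℝ} {q p : E}
    (hrq : r ≤ ‖q‖) (hqp : ‖q‖ ≤ ‖p‖) (hRp : R ≤ ‖p‖) (hrρ : r + ρ ≤ ‖p‖) :
    volume (closedBall (0 : E) R ∩ closedBall p ρ) ≤
      volume ({x : E | r ≤ ‖x‖ ∧ ‖x‖ ≤ R} ∩ closedBall q ρ) := by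
  rcases eq_or_ne p 0 with rfl | hp
  · obtain rfl : q = 0 := norm_le_zero_iff.1 (hqp.trans_eq norm_zero)
    have hr : r ≤ 0 := hrq.trans_eq norm_zero
    exact measure_mono (Set.inter_subset_inter_left _ fun x hx =>
      ⟨hr.trans (norm_nonneg x), mem_closedBall_zero_iff.1 hx⟩)
  · obtain ⟨u, hu, hpu⟩ : ∃ u : E, ‖u‖ = 1 ∧ ‖p‖ • u = p :=
      ⟨‖p‖⁻¹ • p, norm_smul_inv_norm hp, smul_inv_smul₀ (norm_ne_zero_iff.2 hp) p⟩
    have hq : ‖q‖ = ‖‖q‖ • u‖ := by rw [norm_smul, norm_norm, hu, mul_one]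
    calc volume (closedBall (0 : E) R ∩ closedBall p ρ)
        = volume (closedBall (0 : E) R ∩ closedBall (‖p‖ • u) ρ) := by rw [hpu]
      _ ≤ volume (norm ⁻¹' Set.Icc r R ∩ closedBall (‖q‖ • u) ρ) :=
          volume_lens_le_volume_annulus_inter_closedBall_smul hu (norm_nonneg q) hrq hqp hRp hrρ
      _ = volume (norm ⁻¹' Set.Icc r R ∩ closedBall q ρ) :=
          (volume_norm_preimage_inter_closedBall_congr hq _ ρ).symm

end Lines

theorem annulus_minimal_intersection_at_outer_boundary (d : ℕ) (hd : 1 ≤ d) (R δ ρ : ℝ)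
    (hδ : 0 < δ) (hδR : δ ≤ R) (hρ : 0 < ρ) (hρδ : ρ ≤ δ)
    (q p : EuclideanSpace ℝ (Fin d)) (hq₁ : R - δ ≤ ‖q‖) (hq₂ : ‖q‖ ≤ R) (hp : ‖p‖ = R) :
    volume (closedBall (0 : EuclideanSpace ℝ (Fin d)) R ∩ closedBall p ρ) ≤
      volume ({x : EuclideanSpace ℝ (Fin d) | R - δ ≤ ‖x‖ ∧ ‖x‖ ≤ R} ∩ closedBall q ρ) :=
  annulus_minimal_intersection_at_outer_boundary_general hq₁ (hq₂.trans_eq hp.symm) hp.ge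
    (by linarith)
end

section
/- Let d ≥ 1 be an integer and let 0 ≤ A ≤ π. Then ∫_0^A sin^d t dt = 2^d · sin^{d+1}(A/2) · ∫_0^1 u^{(d−1)/2} (1 − u sin²(A/2))^{(d−1)/2} du. -/
/-!
With `v = sin² (t / 2)` one has `v (1 - v) = (sin t / 2)²` and `dv = (sin t / 2) dt`, so
`sin t ^ p dt = 2 ^ p (v (1 - v)) ^ ((p - 1) / 2) dv` wherever `0 < t < π`. Since `v` increases
with `t`, this change of variables is valid even when `p < 1` makes the integrand singular at the
endpoints. Rescaling by `v = u sin² (A / 2)` then moves the upper limit to `1`.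
-/

open Real Set

lemma rpow_eq_sq_rpow_mul_self {x : ℝ} (hx : 0 < x) (p : ℝ) :
    x ^ p = (x ^ 2) ^ ((p - 1) / 2) * x := by
  rw [← rpow_natCast_mul hx.le, ← rpow_add_one hx.ne']
  congr 1
  push_cast
  ring

lemma hasDerivAt_sin_half_sq (t : ℝ) :
    HasDerivAt (fun t ↦ sin (t / 2) ^ 2) (sin (t / 2) * cos (t / 2)) t := by
  refine (((hasDerivAt_id' t).div_const 2).sin.pow 2).congr_deriv ?_
  push_cast
  ring

lemma sin_half_pos {t : ℝ} (ht : t ∈ Ioo 0 π) : 0 < sin (t / 2) :=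
  sin_pos_of_pos_of_lt_pi (by linarith [ht.1]) (by linarith [ht.1, ht.2])

lemma cos_half_pos {t : ℝ} (ht : t ∈ Ioo (-π) π) : 0 < cos (t / 2) :=
  cos_pos_of_mem_Ioo ⟨by linarith [ht.1], by linarith [ht.2]⟩

lemma sin_rpow_eq_half_angle (p : ℝ) {t : ℝ} (ht : t ∈ Ioo 0 π) :
    sin t ^ p =
      2 ^ p * ((sin (t / 2) ^ 2) ^ ((p - 1) / 2) * (1 - sin (t / 2) ^ 2) ^ ((p - 1) / 2)) *
        (sin (t / 2) * cos (t / 2)) := by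
  have hs : 0 < sin (t / 2) := sin_half_pos ht
  have hc : 0 < cos (t / 2) := cos_half_pos ⟨by linarith [ht.1, pi_pos], ht.2⟩
  calc sin t ^ p = (2 * sin (t / 2) * cos (t / 2)) ^ p := by
        rw [← sin_two_mul, mul_div_cancel₀ t two_ne_zero]
    _ = 2 ^ p * sin (t / 2) ^ p * cos (t / 2) ^ p := by
        rw [mul_rpow (by positivity) hc.le, mul_rpow zero_le_two hs.le]
    _ = _ := by
        rw [rpow_eq_sq_rpow_mul_self hs, rpow_eq_sq_rpow_mul_self hc, cos_sq']
        ring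

lemma integral_sin_rpow_eq_integral_rpow_mul_one_sub_rpow (p : ℝ) {a b : ℝ}
    (ha : a ∈ Icc 0 π) (hb : b ∈ Icc 0 π) :
    ∫ t in a..b, sin t ^ p =
      2 ^ p * ∫ v in (sin (a / 2) ^ 2)..(sin (b / 2) ^ 2),
        v ^ ((p - 1) / 2) * (1 - v) ^ ((p - 1) / 2) := by
  have hsub : uIoo a b ⊆ Ioo 0 π := Ioo_subset_Ioo (le_min ha.1 hb.1) (max_le ha.2 hb.2)
  have hderiv_nonneg : ∀ t ∈ uIoo a b, 0 ≤ sin (t / 2) * cos (t / 2) := fun t ht ↦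
    (mul_pos (sin_half_pos (hsub ht))
      (cos_half_pos ⟨by linarith [(hsub ht).1, pi_pos], (hsub ht).2⟩)).le
  rw [← intervalIntegral.integral_const_mul,
    ← intervalIntegral.integral_comp_mul_deriv_of_deriv_nonneg (by fun_prop)
      (fun t _ ↦ hasDerivAt_sin_half_sq t) hderiv_nonneg]
  exact intervalIntegral.integral_congr_uIoo fun t ht ↦ sin_rpow_eq_half_angle p (hsub ht)

lemma integral_rpow_mul_eq_rpow_mul_integral_comp_mul_right {q c : ℝ} (hq : q ≠ -1) (hc : 0 ≤ c)
    (g : ℝ → ℝ) :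
    ∫ v in (0 : ℝ)..c, v ^ q * g v = c ^ (q + 1) * ∫ u in (0 : ℝ)..1, u ^ q * g (u * c) := by
  rcases hc.eq_or_lt with rfl | hc_pos
  · rw [intervalIntegral.integral_same, zero_rpow fun h ↦ hq (eq_neg_of_add_eq_zero_left h),
      zero_mul]
  calc ∫ v in (0 : ℝ)..c, v ^ q * g v
      = c * ∫ u in (0 : ℝ)..1, (u * c) ^ q * g (u * c) := by
        rw [intervalIntegral.mul_integral_comp_mul_right (f := fun v ↦ v ^ q * g v), zero_mul,
          one_mul]
    _ = c * ∫ u in (0 : ℝ)..1, c ^ q * (u ^ q * g (u * c)) := by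
        congr 1
        refine intervalIntegral.integral_congr_Ioo_of_le zero_le_one fun u hu ↦ ?_
        simp only [mul_rpow hu.1.le hc]
        ring
    _ = c ^ (q + 1) * ∫ u in (0 : ℝ)..1, u ^ q * g (u * c) := by
        rw [intervalIntegral.integral_const_mul, rpow_add_one hc_pos.ne']
        ring

theorem sin_pow_integral_substitution_general {p A : ℝ} (hp : -1 < p) (hA0 : 0 ≤ A)
    (hAπ : A ≤ π) :
    ∫ t in (0 : ℝ)..A, sin t ^ p =
      2 ^ p * sin (A / 2) ^ (p + 1) *
        ∫ u in (0 : ℝ)..1, u ^ ((p - 1) / 2) * (1 - u * sin (A / 2) ^ 2) ^ ((p - 1) / 2) := by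
  have hsin : 0 ≤ sin (A / 2) := sin_nonneg_of_nonneg_of_le_pi (by linarith) (by linarith)
  have hq : (p - 1) / 2 ≠ -1 := by linarith
  have hpow : (sin (A / 2) ^ 2) ^ ((p - 1) / 2 + 1) = sin (A / 2) ^ (p + 1) := by
    rw [← rpow_natCast_mul hsin]
    congr 1
    push_cast
    ring
  rw [integral_sin_rpow_eq_integral_rpow_mul_one_sub_rpow p ⟨le_rfl, pi_nonneg⟩ ⟨hA0, hAπ⟩,
    zero_div, sin_zero, zero_pow two_ne_zero,
    integral_rpow_mul_eq_rpow_mul_integral_comp_mul_right hq (sq_nonneg _)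
      (fun v ↦ (1 - v) ^ ((p - 1) / 2)), hpow, mul_assoc]

theorem sin_pow_integral_substitution (d : ℕ) (hd : 1 ≤ d) (A : ℝ) (hA0 : 0 ≤ A)
    (hAπ : A ≤ Real.pi) :
    ∫ t in (0 : ℝ)..A, Real.sin t ^ d =
      2 ^ d * Real.sin (A / 2) ^ (d + 1) *
        ∫ u in (0 : ℝ)..1,
          u ^ (((d : ℝ) - 1) / 2) * (1 - u * Real.sin (A / 2) ^ 2) ^ (((d : ℝ) - 1) / 2) := by
  have hd' : (-1 : ℝ) < d := neg_one_lt_zero.trans_le d.cast_nonneg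
  exact_mod_cast sin_pow_integral_substitution_general hd' hA0 hAπ
end

section
/- Let d ≥ 1 be an integer and let 0 ≤ s ≤ 1/2. Then ∫_0^1 t^{(d−1)/2} (1 − t s)^{(d−1)/2} dt ≥ 2^{(d−1)/2} · Γ((d+1)/2)² / Γ(d+1). -/
/-!
For `p ≥ 0` the integral `∫ t in 0..1, t ^ p * (1 - t * s) ^ p` decreases in `s` on `s ≤ 1`, so over
`s ≤ 1 / 2` it is smallest at `s = 1 / 2`. There the substitution `t = 2 * u` turns it into
`2 ^ (p + 1)` times the integral of `u ^ p * (1 - u) ^ p` over `[0, 1 / 2]`, which is half of a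
Beta integral by the symmetry `u ↦ 1 - u`.
-/

open MeasureTheory ProbabilityTheory Set

theorem integral_eq_two_smul_integral_midpoint {E : Type*} [NormedAddCommGroup E]
    [NormedSpace ℝ E] {f : ℝ → E} {a b : ℝ} (hf : IntervalIntegrable f volume a b)
    (hsymm : ∀ x, f (a + b - x) = f x) :
    ∫ x in a..b, f x = (2 : ℝ) • ∫ x in a..midpoint ℝ a b, f x := by
  have hmem : midpoint ℝ a b ∈ uIcc a b := by
    simpa only [segment_eq_uIcc] using midpoint_mem_segment (𝕜 := ℝ) a b
  have hreflect : ∫ x in midpoint ℝ a b..b, f x = ∫ x in a..midpoint ℝ a b, f x := by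
    have hmid : a + b - midpoint ℝ a b = midpoint ℝ a b := by
      rw [← midpoint_add_self ℝ a b, add_sub_cancel_right]
    simpa only [hsymm, hmid, add_sub_cancel_left] using
      (intervalIntegral.integral_comp_sub_left f (a := a) (b := midpoint ℝ a b) (a + b)).symm
  rw [← intervalIntegral.integral_add_adjacent_intervals
    (hf.mono_set (uIcc_subset_uIcc_left hmem)) (hf.mono_set (uIcc_subset_uIcc_right hmem)),
    hreflect, two_smul]

theorem ofReal_rpow_mul_one_sub_rpow {x : ℝ} (hx : x ∈ Icc 0 1) (p q : ℝ) :
    ((x ^ p * (1 - x) ^ q : ℝ) : ℂ) = (x : ℂ) ^ (p : ℂ) * (1 - (x : ℂ)) ^ (q : ℂ) := by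
  rw [Complex.ofReal_mul, Complex.ofReal_cpow hx.1, Complex.ofReal_cpow (sub_nonneg.2 hx.2),
    Complex.ofReal_sub, Complex.ofReal_one]

section BetaIntegral

variable {p q : ℝ}

theorem intervalIntegrable_rpow_mul_one_sub_rpow (hp : -1 < p) (hq : -1 < q) :
    IntervalIntegrable (fun x : ℝ ↦ x ^ p * (1 - x) ^ q) volume 0 1 := by
  have h := Complex.betaIntegral_convergent (u := ↑(p + 1)) (v := ↑(q + 1))
    (by rw [Complex.ofReal_re]; linarith) (by rw [Complex.ofReal_re]; linarith)
  rw [intervalIntegrable_iff] at h ⊢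
  refine IntegrableOn.congr_fun (Integrable.re h) (fun x hx ↦ ?_) measurableSet_uIoc
  rw [uIoc_of_le zero_le_one] at hx
  simp [← ofReal_rpow_mul_one_sub_rpow (Ioc_subset_Icc_self hx), -Complex.ofReal_mul]

theorem integral_rpow_mul_one_sub_rpow (hp : -1 < p) (hq : -1 < q) :
    ∫ x in (0 : ℝ)..1, x ^ p * (1 - x) ^ q = beta (p + 1) (q + 1) := by
  rw [beta_eq_betaIntegralReal _ _ (by linarith) (by linarith), Complex.betaIntegral,
    ← Complex.ofReal_re (∫ x in (0 : ℝ)..1, x ^ p * (1 - x) ^ q),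
    ← intervalIntegral.integral_ofReal]
  congr 1
  refine intervalIntegral.integral_congr fun x hx ↦ ?_
  rw [uIcc_of_le zero_le_one] at hx
  simp [ofReal_rpow_mul_one_sub_rpow hx, -Complex.ofReal_mul]

theorem integral_zero_half_rpow_mul_one_sub_rpow_self (hp : -1 < p) :
    ∫ x in (0 : ℝ)..1 / 2, x ^ p * (1 - x) ^ p = beta (p + 1) (p + 1) / 2 := by
  have h := integral_eq_two_smul_integral_midpoint
    (intervalIntegrable_rpow_mul_one_sub_rpow hp hp) fun x ↦ by
      rw [zero_add, sub_sub_cancel, mul_comm]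
  rw [integral_rpow_mul_one_sub_rpow hp hp, midpoint_eq_smul_add, zero_add, smul_eq_mul,
    smul_eq_mul, mul_one, invOf_eq_inv, ← one_div] at h
  linarith

theorem integral_rpow_mul_one_sub_mul_rpow {c : ℝ} (hc : 0 < c) (p q : ℝ) :
    ∫ t in (0 : ℝ)..1, t ^ p * (1 - t * c) ^ q =
      c⁻¹ ^ (p + 1) * ∫ u in (0 : ℝ)..c, u ^ p * (1 - u) ^ q := by
  have hscale : ∀ t ∈ uIcc (0 : ℝ) 1,
      t ^ p * (1 - t * c) ^ q = c⁻¹ ^ p * ((t * c) ^ p * (1 - t * c) ^ q) := fun t ht ↦ by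
    rw [uIcc_of_le zero_le_one] at ht
    rw [← mul_assoc, ← Real.mul_rpow (inv_nonneg.2 hc.le) (mul_nonneg ht.1 hc.le), mul_comm t,
      inv_mul_cancel_left₀ hc.ne', mul_comm c]
  rw [intervalIntegral.integral_congr hscale, intervalIntegral.integral_const_mul,
    intervalIntegral.integral_comp_mul_right (fun u ↦ u ^ p * (1 - u) ^ q) hc.ne', zero_mul,
    one_mul, smul_eq_mul, ← mul_assoc, Real.rpow_add_one (inv_ne_zero hc.ne')]

theorem integral_rpow_mul_one_sub_mul_half_rpow_self (hp : -1 < p) :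
    ∫ t in (0 : ℝ)..1, t ^ p * (1 - t * (1 / 2)) ^ p = 2 ^ p * beta (p + 1) (p + 1) := by
  rw [integral_rpow_mul_one_sub_mul_rpow one_half_pos,
    integral_zero_half_rpow_mul_one_sub_rpow_self hp, one_div, inv_inv,
    Real.rpow_add_one two_ne_zero]
  ring

theorem antitoneOn_integral_rpow_mul_one_sub_mul_rpow (hp : -1 < p) (hq : 0 ≤ q) :
    AntitoneOn (fun s : ℝ ↦ ∫ t in (0 : ℝ)..1, t ^ p * (1 - t * s) ^ q) (Iic 1) := by
  have hint (s : ℝ) : IntervalIntegrable (fun t : ℝ ↦ t ^ p * (1 - t * s) ^ q) volume 0 1 :=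
    (intervalIntegral.intervalIntegrable_rpow' hp).mul_continuousOn
      (by fun_prop (disch := exact hq) : Continuous fun t : ℝ ↦ (1 - t * s) ^ q).continuousOn
  intro r _ s (hs : s ≤ 1) hrs
  refine intervalIntegral.integral_mono_on zero_le_one (hint s) (hint r) fun t ⟨ht0, ht1⟩ ↦ ?_
  have hbase : 0 ≤ 1 - t * s := sub_nonneg.2 ((mul_le_of_le_one_right ht0 hs).trans ht1)
  gcongr

end BetaIntegral

theorem beta_lower_bound_general {d s : ℝ} (hd : 1 ≤ d) (hs : s ≤ 1 / 2) :
    2 ^ ((d - 1) / 2) * Real.Gamma ((d + 1) / 2) ^ 2 / Real.Gamma (d + 1) ≤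
      ∫ t in (0 : ℝ)..1, t ^ ((d - 1) / 2) * (1 - t * s) ^ ((d - 1) / 2) := by
  have hp : 0 ≤ (d - 1) / 2 := by linarith
  have hp' : -1 < (d - 1) / 2 := by linarith
  calc 2 ^ ((d - 1) / 2) * Real.Gamma ((d + 1) / 2) ^ 2 / Real.Gamma (d + 1)
    _ = 2 ^ ((d - 1) / 2) * beta ((d - 1) / 2 + 1) ((d - 1) / 2 + 1) := by
      rw [beta, show (d - 1) / 2 + 1 = (d + 1) / 2 by ring, add_halves, ← sq, mul_div_assoc]
    _ = ∫ t in (0 : ℝ)..1, t ^ ((d - 1) / 2) * (1 - t * (1 / 2)) ^ ((d - 1) / 2) :=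
      (integral_rpow_mul_one_sub_mul_half_rpow_self hp').symm
    _ ≤ ∫ t in (0 : ℝ)..1, t ^ ((d - 1) / 2) * (1 - t * s) ^ ((d - 1) / 2) :=
      antitoneOn_integral_rpow_mul_one_sub_mul_rpow hp' hp (mem_Iic.2 (by linarith))
        (mem_Iic.2 (by norm_num)) hs

theorem beta_lower_bound (d : ℕ) (hd : 1 ≤ d) (s : ℝ) (hs0 : 0 ≤ s) (hs : s ≤ 1 / 2) :
    (2 : ℝ) ^ (((d : ℝ) - 1) / 2) * Real.Gamma (((d : ℝ) + 1) / 2) ^ 2 /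
        Real.Gamma ((d : ℝ) + 1) ≤
      ∫ t in (0 : ℝ)..1, t ^ (((d : ℝ) - 1) / 2) * (1 - t * s) ^ (((d : ℝ) - 1) / 2) :=
  beta_lower_bound_general (Nat.one_le_cast.2 hd) hs
end
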